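/- arXiv:1511.09189 — 4 statements merged into one kernel-verified Lean document; each statement's English description precedes it below -/
import Mathlib

section
/- Let H₁ and H₂ be finite-dimensional complex Hilbert spaces, H = H₁ ⊗ H₂, and d₂ = dim H₂. Let f : (0,∞) → ℝ be a matrix entropy. Then the function G(ρ) = d₂⁻¹ · Tr₁₂ f(d₂ρ) − Tr₁ f(ρ₁) is convex on the set of positive definite operators ρ acting on H, where ρ₁ = Tr₂ ρ is the partial trace of ρ over H₂. That is, for all positive definite ρ, σ on H and all t ∈ [0,1], G(tρ + (1−t)σ) ≤ t·G(ρ) + (1−t)·G(σ). -/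
open Matrix
open scoped ComplexOrder

attribute [local instance] Matrix.normedAddCommGroup Matrix.normedSpace

/-- The matrix function induced by `f : ℝ → ℝ` via the functional calculus
(defined to be `0` on non-Hermitian matrices). -/
noncomputable def matFun {m : Type*} [Fintype m] [DecidableEq m] (f : ℝ → ℝ)
    (x : Matrix m m ℂ) : Matrix m m ℂ :=
  if hx : x.IsHermitian then
    (hx.eigenvectorUnitary : Matrix m m ℂ) *
      Matrix.diagonal (fun i => (f (hx.eigenvalues i) : ℂ)) *
      star (hx.eigenvectorUnitary : Matrix m m ℂ)
  else 0

/-- `D` is the (complex-linear extension of the) Fréchet differential at `x` of the matrix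
function induced by `f`, the differential being taken within the real subspace of
Hermitian matrices. -/
noncomputable def IsFDerivMatFun {m : Type*} [Fintype m] [DecidableEq m] (f : ℝ → ℝ)
    (x : Matrix m m ℂ) (D : Matrix m m ℂ →L[ℂ] Matrix m m ℂ) : Prop :=
  HasFDerivWithinAt (matFun f) (D.restrictScalars ℝ) {y : Matrix m m ℂ | y.IsHermitian} x

/-- `f : (0,∞) → ℝ` (given together with its derivative `f'`) is a matrix entropy:
it is twice continuously differentiable and for every `n` the map
`(x, h) ↦ Tr (h* ⬝ (Df' x) h)` is jointly convex in pairs `(x, h)` of an `n × n`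
positive definite matrix `x` and an arbitrary `n × n` matrix `h`. -/
noncomputable def IsMatrixEntropy (f f' : ℝ → ℝ) : Prop :=
  ContDiffOn ℝ 2 f (Set.Ioi 0) ∧
  (∀ t ∈ Set.Ioi (0 : ℝ), HasDerivAt f (f' t) t) ∧
  ∀ (n : ℕ)
    (D : Matrix (Fin n) (Fin n) ℂ → (Matrix (Fin n) (Fin n) ℂ →L[ℂ] Matrix (Fin n) (Fin n) ℂ)),
    (∀ x : Matrix (Fin n) (Fin n) ℂ, x.PosDef → IsFDerivMatFun f' x (D x)) →
    ConvexOn ℝ {q : Matrix (Fin n) (Fin n) ℂ × Matrix (Fin n) (Fin n) ℂ | q.1.PosDef}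
      (fun q => (Matrix.trace (q.2ᴴ * (D q.1) q.2)).re)

/-- The partial trace over the second tensor factor. -/
noncomputable def ptrace {ι₁ ι₂ : Type*} [Fintype ι₂]
    (ρ : Matrix (ι₁ × ι₂) (ι₁ × ι₂) ℂ) : Matrix ι₁ ι₁ ℂ :=
  Matrix.of fun i j => ∑ k : ι₂, ρ (i, k) (j, k)

section Helpers

/-- Schur-multiplier type map `h ↦ U (c ∘ (U* h U)) U*`. -/
noncomputable def dkMap {m : Type*} [Fintype m] [DecidableEq m] (U : Matrix m m ℂ)
    (c : m → m → ℂ) : Matrix m m ℂ →ₗ[ℂ] Matrix m m ℂ where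
  toFun h := U * (Matrix.of fun i k => c i k * (star U * h * U) i k) * star U
  map_add' a b := by
    rw [← add_mul, ← mul_add]
    congr 2
    ext i k
    simp [mul_add, add_mul]
  map_smul' r a := by
    have : (Matrix.of fun i k => c i k * (star U * (r • a) * U) i k)
        = r • (Matrix.of fun i k => c i k * (star U * a * U) i k) := by
      ext i k
      simp
      ring
    rw [this, Matrix.mul_smul, Matrix.smul_mul]
    rfl

lemma entry_conj_bound {m : Type*} [Fintype m] [DecidableEq m] {A B : Matrix m m ℂ}
    (hA : ∀ i j, ‖A i j‖ ≤ 1) (hB : ∀ i j, ‖B i j‖ ≤ 1) (h : Matrix m m ℂ) (r : ℝ)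
    (hr : ∀ i j, ‖h i j‖ ≤ r) (i j : m) :
    ‖(A * h * B) i j‖ ≤ (Fintype.card m : ℝ) ^ 2 * r := by
  rw [Matrix.mul_apply]
  calc _ ≤ ∑ _l : m, (Fintype.card m : ℝ) * r := by
        refine norm_sum_le_of_le _ fun l _ => ?_
        rw [norm_mul]
        have h1 : ‖(A * h) i l‖ ≤ (Fintype.card m : ℝ) * r := by
          rw [Matrix.mul_apply]
          calc _ ≤ ∑ _l : m, r := by
                refine norm_sum_le_of_le _ fun k _ => ?_
                rw [norm_mul]
                calc _ ≤ 1 * ‖h k l‖ := by gcongr; exact hA _ _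
                  _ ≤ r := by simpa using hr k l
            _ = _ := by simp
        calc _ ≤ ‖(A * h) i l‖ * 1 := by gcongr; exact hB _ _
          _ ≤ _ := by simpa using h1
    _ = _ := by simp; ring

lemma dslope_key {m : Type*} [Fintype m] (g : ℝ → ℝ) (l : m → ℝ)
    (hg : ∀ i, DifferentiableAt ℝ g (l i)) (ε : ℝ) (hε : 0 < ε) :
    ∃ δ > 0, ∀ i k μ, |μ - l k| < δ → |dslope g (l i) μ - dslope g (l i) (l k)| ≤ ε := by
  have hc : ∀ i k, ContinuousAt (dslope g (l i)) (l k) := by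
    intro i k
    by_cases h : l k = l i
    · rw [h]; exact continuousAt_dslope_same.2 (hg i)
    · exact (continuousAt_dslope_of_ne h).2 (hg k).continuousAt
  have : ∀ᶠ δ in nhdsWithin (0:ℝ) (Set.Ioi 0), ∀ i k, ∀ μ, |μ - l k| < δ →
      |dslope g (l i) μ - dslope g (l i) (l k)| ≤ ε := by
    rw [Filter.eventually_all]; intro i
    rw [Filter.eventually_all]; intro k
    obtain ⟨d, hd, h⟩ := Metric.continuousAt_iff.1 (hc i k) ε hε
    filter_upwards [Ioo_mem_nhdsGT hd] with δ hδ μ hμ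
    exact (h (show dist μ (l k) < d from hμ.trans hδ.2)).le
  obtain ⟨δ, h, h0⟩ := (this.and self_mem_nhdsWithin).exists
  exact ⟨δ, h0, h⟩

lemma isHermitian_eq {m : Type*} [Fintype m] [DecidableEq m] {x : Matrix m m ℂ}
    (hx : x.IsHermitian) : x = (hx.eigenvectorUnitary : Matrix m m ℂ) *
      Matrix.diagonal (fun i => (hx.eigenvalues i : ℂ)) *
      star (hx.eigenvectorUnitary : Matrix m m ℂ) := by
  conv_lhs => rw [hx.spectral_theorem]
  rfl

/-- Core estimate for the Daleckii-Krein formula. -/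
lemma dk_core {m : Type*} [Fintype m] [DecidableEq m] (g : ℝ → ℝ) (U V : Matrix m m ℂ)
    (hU : U ∈ Matrix.unitaryGroup m ℂ) (hV : V ∈ Matrix.unitaryGroup m ℂ)
    (l μ : m → ℝ) (x y : Matrix m m ℂ)
    (hx : x = U * Matrix.diagonal (fun i => (l i : ℂ)) * star U)
    (hy : y = V * Matrix.diagonal (fun i => (μ i : ℂ)) * star V)
    (ε δ r : ℝ) (hε : 0 < ε) (hδ : 0 < δ)
    (key : ∀ i k μ, |μ - l k| < δ → |dslope g (l i) μ - dslope g (l i) (l k)| ≤ ε)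
    (M : ℝ) (hM : ∀ i k, |dslope g (l i) (l k)| ≤ M)
    (hr : ∀ i j, ‖(y - x) i j‖ ≤ r)
    (hr1 : (Fintype.card m : ℝ) ^ 3 * r < δ)
    (hr2 : (2 * M + ε) * ((Fintype.card m : ℝ) ^ 2 * r) ≤ ε * δ) (i k : m) :
    ‖(V * Matrix.diagonal (fun i => (g (μ i) : ℂ)) * star V
      - U * Matrix.diagonal (fun i => (g (l i) : ℂ)) * star U
      - dkMap U (fun i k => ((dslope g (l i) (l k) : ℝ) : ℂ)) (y - x)) i k‖
      ≤ (Fintype.card m : ℝ) ^ 5 * ε * r := by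
  have hUU : star U * U = 1 := (Matrix.mem_unitaryGroup_iff').1 hU
  have hUU' : U * star U = 1 := (Matrix.mem_unitaryGroup_iff).1 hU
  have hVV : star V * V = 1 := (Matrix.mem_unitaryGroup_iff').1 hV
  have hVV' : V * star V = 1 := (Matrix.mem_unitaryGroup_iff).1 hV
  have bU : ∀ i j, ‖U i j‖ ≤ 1 := entry_norm_bound_of_unitary hU
  have bV : ∀ i j, ‖V i j‖ ≤ 1 := entry_norm_bound_of_unitary hV
  have bU' : ∀ i j, ‖(star U) i j‖ ≤ 1 := fun i j => by
    simpa [Matrix.star_apply] using bU j i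
  set W := star U * V with hWdef
  have hW : W ∈ Matrix.unitaryGroup m ℂ := mul_mem (Unitary.star_mem hU) hV
  have bW : ∀ i j, ‖W i j‖ ≤ 1 := entry_norm_bound_of_unitary hW
  have hWW : W * star W = 1 := (Matrix.mem_unitaryGroup_iff).1 hW
  have hWW' : star W * W = 1 := (Matrix.mem_unitaryGroup_iff').1 hW
  have hrow : ∀ i k, ∑ j, W i j * star (W k j) = if i = k then 1 else 0 := by
    intro i k
    have := congrFun (congrFun hWW i) k
    rw [Matrix.mul_apply, Matrix.one_apply] at this
    simpa [Matrix.star_apply] using this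
  have hr0 : 0 ≤ r := (norm_nonneg _).trans (hr i k)
  set N : ℝ := (Fintype.card m : ℝ) with hN
  have hN1 : 1 ≤ N := by
    have : 0 < Fintype.card m := Fintype.card_pos_iff.2 ⟨i⟩
    rw [hN]; exact_mod_cast this
  -- first bound
  have hWent : ∀ i j, (star U * (y - x) * V) i j = ((μ j - l i : ℝ) : ℂ) * W i j := by
    intro i j
    have : star U * (y - x) * V = W * Matrix.diagonal (fun i => (μ i : ℂ))
        - Matrix.diagonal (fun i => (l i : ℂ)) * W := by
      rw [hx, hy, mul_sub, sub_mul]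
      congr 1
      · simp only [mul_assoc, hVV, mul_one, hWdef]
      · simp only [← mul_assoc, hUU, one_mul, hWdef]
    rw [this, Matrix.sub_apply, Matrix.mul_diagonal, Matrix.diagonal_mul]
    push_cast
    ring
  have hb1 : ∀ i j, |μ j - l i| * ‖W i j‖ ≤ N ^ 2 * r := by
    intro i j
    have := entry_conj_bound bU' bV (y - x) r hr i j
    rwa [hWent, norm_mul, Complex.norm_real, Real.norm_eq_abs] at this
  have hnear : ∀ j, ∃ k, |μ j - l k| < δ := by
    intro j
    by_contra hcon
    push Not at hcon
    have hcol : ∑ k, ‖W k j‖ ^ 2 = 1 := by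
      have := congrFun (congrFun hWW' j) j
      rw [Matrix.mul_apply, Matrix.one_apply_eq] at this
      have h2 : ((∑ k, ‖W k j‖ ^ 2 : ℝ) : ℂ) = 1 := by
        rw [← this]
        push_cast
        refine Finset.sum_congr rfl fun k _ => ?_
        rw [Matrix.star_apply, Complex.star_def, Complex.conj_mul']
      exact_mod_cast h2
    have : δ ≤ N ^ 3 * r := by
      calc δ = ∑ k, δ * ‖W k j‖ ^ 2 := by rw [← Finset.mul_sum, hcol, mul_one]
        _ ≤ ∑ _k : m, N ^ 2 * r := by
          refine Finset.sum_le_sum fun k _ => ?_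
          refine le_trans ?_ (hb1 k j)
          have h1 : ‖W k j‖ ^ 2 ≤ ‖W k j‖ := by
            nlinarith [bW k j, norm_nonneg (W k j)]
          exact mul_le_mul (hcon k) h1 (by positivity) (by positivity)
        _ = N ^ 3 * r := by simp [← hN]; ring
    linarith
  have hbd : ∀ i j, |dslope g (l i) (μ j)| ≤ M + ε := by
    intro i j
    obtain ⟨k, hk⟩ := hnear j
    have h1 := key i k _ hk
    have h2 := hM i k
    have h3 := abs_add_le (dslope g (l i) (μ j) - dslope g (l i) (l k)) (dslope g (l i) (l k))
    rw [sub_add_cancel] at h3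
    linarith
  have hsmall : ∀ i k j, |dslope g (l i) (μ j) - dslope g (l i) (l k)| * ‖W k j‖ ≤ ε := by
    intro i k j
    by_cases h : |μ j - l k| < δ
    · have := key i k _ h
      calc _ ≤ |dslope g (l i) (μ j) - dslope g (l i) (l k)| * 1 := by gcongr; exact bW _ _
        _ ≤ ε := by linarith
    · push Not at h
      have h1 := hb1 k j
      have h2 : |dslope g (l i) (μ j) - dslope g (l i) (l k)| ≤ 2 * M + ε := by
        have := abs_sub (dslope g (l i) (μ j)) (dslope g (l i) (l k))
        have := hbd i j
        have := hM i k
        linarith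
      have h3 : δ * ‖W k j‖ ≤ N ^ 2 * r := le_trans (by gcongr) h1
      have h4 : 0 ≤ 2 * M + ε := le_trans (abs_nonneg _) h2
      have h5 : (|dslope g (l i) (μ j) - dslope g (l i) (l k)| * ‖W k j‖) * δ ≤ ε * δ := by
        calc _ = |dslope g (l i) (μ j) - dslope g (l i) (l k)| * (δ * ‖W k j‖) := by ring
          _ ≤ (2 * M + ε) * (N ^ 2 * r) := by gcongr
          _ ≤ _ := hr2
      exact le_of_mul_le_mul_right h5 hδ
  set R := V * Matrix.diagonal (fun i => (g (μ i) : ℂ)) * star V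
      - U * Matrix.diagonal (fun i => (g (l i) : ℂ)) * star U
      - dkMap U (fun i k => ((dslope g (l i) (l k) : ℝ) : ℂ)) (y - x) with hR
  set S := star U * R * U with hS
  have hRS : R = U * S * star U := by
    rw [hS]
    simp only [← mul_assoc, hUU', one_mul]
    simp only [mul_assoc, hUU', mul_one]
  have hWs : star W = star V * U := by simp [hWdef]
  have hS2 : S = W * Matrix.diagonal (fun i => (g (μ i) : ℂ)) * star W
      - Matrix.diagonal (fun i => (g (l i) : ℂ))
      - Matrix.of fun i k => ((dslope g (l i) (l k) : ℝ) : ℂ) * (W * Matrix.diagonal (fun i => (μ i : ℂ)) * star W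
      - Matrix.diagonal (fun i => (l i : ℂ))) i k := by
    have e1 : star U * (y - x) * U = W * Matrix.diagonal (fun i => (μ i : ℂ)) * star W
      - Matrix.diagonal (fun i => (l i : ℂ)) := by
      rw [hx, hy, mul_sub, sub_mul, hWs, hWdef]
      congr 1
      · simp only [mul_assoc]
      · simp only [← mul_assoc, hUU, one_mul]
        simp only [mul_assoc, hUU, mul_one]
    rw [hS, hR, mul_sub, mul_sub, sub_mul, sub_mul, hWs]
    congr 1
    · congr 1
      · simp only [mul_assoc, hWdef]
      · simp only [← mul_assoc, hUU, one_mul]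
        simp only [mul_assoc, hUU, mul_one]
    · rw [← hWs, ← e1]
      simp only [dkMap, LinearMap.coe_mk, AddHom.coe_mk, ← mul_assoc, hUU, one_mul]
      simp only [mul_assoc, hUU, mul_one]
  have hSent : ∀ i k, S i k = ∑ j, (((dslope g (l i) (μ j) - dslope g (l i) (l k) : ℝ) : ℂ)
      * star (W k j)) * (((μ j - l i : ℝ) : ℂ) * W i j) := by
    intro i k
    have ent : ∀ c : m → ℝ, (W * Matrix.diagonal (fun i => (c i : ℂ)) * star W) i k
        = ∑ j, (c j : ℂ) * (W i j * star (W k j)) := by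
      intro c
      rw [Matrix.mul_apply]
      refine Finset.sum_congr rfl fun j _ => ?_
      rw [Matrix.mul_diagonal, Matrix.star_apply]
      ring
    have dg : ∀ c : m → ℝ, Matrix.diagonal (fun i => (c i : ℂ)) i k
        = ∑ j, (c i : ℂ) * (W i j * star (W k j)) := by
      intro c
      rw [← Finset.mul_sum, hrow, Matrix.diagonal_apply]
      split_ifs <;> simp
    rw [hS2, Matrix.sub_apply, Matrix.sub_apply, Matrix.of_apply, Matrix.sub_apply,
      ent (fun i => g (μ i)), ent μ, dg (fun i => g (l i)), dg l,
      ← Finset.sum_sub_distrib, ← Finset.sum_sub_distrib, Finset.mul_sum, ← Finset.sum_sub_distrib]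
    refine Finset.sum_congr rfl fun j _ => ?_
    have := sub_smul_dslope g (l i) (μ j)
    rw [smul_eq_mul] at this
    have h2 : ((μ j : ℂ) - l i) * ((dslope g (l i) (μ j) : ℝ) : ℂ) = g (μ j) - g (l i) := by
      exact_mod_cast this
    push_cast
    linear_combination (-(W i j * star (W k j))) * h2
  have hSb : ∀ i k, ‖S i k‖ ≤ N ^ 3 * ε * r := by
    intro i k
    rw [hSent]
    calc _ ≤ ∑ _j : m, ε * (N ^ 2 * r) := by
          refine norm_sum_le_of_le _ fun j _ => ?_
          rw [norm_mul, norm_mul, norm_mul, norm_star, Complex.norm_real, Complex.norm_real,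
            Real.norm_eq_abs, Real.norm_eq_abs]
          exact mul_le_mul (hsmall i k j) (hb1 i j) (by positivity) hε.le
      _ = _ := by simp [← hN]; ring
  rw [hRS]
  have := entry_conj_bound bU bU' S _ hSb i k
  rw [← hN] at this
  linarith [this]

/-- Daleckii-Krein: Fréchet differentiability of the matrix function. -/
lemma dk_hasFDeriv {m : Type*} [Fintype m] [DecidableEq m] (g : ℝ → ℝ) (x : Matrix m m ℂ)
    (hx : x.IsHermitian) (hg : ∀ i, DifferentiableAt ℝ g (hx.eigenvalues i)) :
    IsFDerivMatFun g x (LinearMap.toContinuousLinearMap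
      (dkMap (hx.eigenvectorUnitary : Matrix m m ℂ)
        (fun i k => ((dslope g (hx.eigenvalues i) (hx.eigenvalues k) : ℝ) : ℂ)))) := by
  unfold IsFDerivMatFun
  refine hasFDerivWithinAt_iff_isLittleO.2 ?_
  rw [Asymptotics.isLittleO_iff]
  intro c hc
  set l := hx.eigenvalues
  set N : ℝ := (Fintype.card m : ℝ) with hN
  have hN0 : 0 ≤ N := by positivity
  set ε := c / (N ^ 5 + 1) with hεd
  have hε : 0 < ε := by positivity
  obtain ⟨δ, hδ, key⟩ := dslope_key g l hg ε hε
  obtain ⟨M, hM0, hM⟩ : ∃ M : ℝ, 0 ≤ M ∧ ∀ i k, |dslope g (l i) (l k)| ≤ M := by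
    refine ⟨∑ i, ∑ k, |dslope g (l i) (l k)|, by positivity, fun i k => ?_⟩
    refine le_trans ?_ (Finset.single_le_sum (f := fun i => ∑ k, |dslope g (l i) (l k)|)
      (fun i _ => by positivity) (Finset.mem_univ i))
    exact Finset.single_le_sum (f := fun k => |dslope g (l i) (l k)|)
      (fun i _ => by positivity) (Finset.mem_univ k)
  have t0 : Filter.Tendsto (fun y : Matrix m m ℂ => ‖y - x‖)
      (nhdsWithin x {y | y.IsHermitian}) (nhds 0) := by
    have : Filter.Tendsto (fun y : Matrix m m ℂ => ‖y - x‖) (nhds x) (nhds ‖x - x‖) :=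
      ((continuous_id.sub continuous_const).norm).tendsto x
    rw [sub_self, norm_zero] at this
    exact this.mono_left nhdsWithin_le_nhds
  have t1 := t0.const_mul (N ^ 3)
  have t2 := (t0.const_mul (N ^ 2)).const_mul (2 * M + ε)
  simp only [mul_zero] at t1 t2
  filter_upwards [t1.eventually_lt_const hδ, t2.eventually_lt_const (mul_pos hε hδ),
    self_mem_nhdsWithin] with y h1 h2 hy
  have hy' : y.IsHermitian := hy
  rw [Matrix.norm_le_iff (by positivity)]
  intro i k
  have := dk_core g (hx.eigenvectorUnitary : Matrix m m ℂ) (hy'.eigenvectorUnitary : Matrix m m ℂ)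
    hx.eigenvectorUnitary.2 hy'.eigenvectorUnitary.2 l hy'.eigenvalues x y
    (isHermitian_eq hx) (isHermitian_eq hy') ε δ ‖y - x‖ hε hδ key M hM
    (fun i j => Matrix.norm_entry_le_entrywise_sup_norm _) h1 h2.le i k
  have e1 : matFun g x = (hx.eigenvectorUnitary : Matrix m m ℂ) *
      Matrix.diagonal (fun i => (g (l i) : ℂ)) *
      star (hx.eigenvectorUnitary : Matrix m m ℂ) := by rw [matFun, dif_pos hx]
  have e2 : matFun g y = (hy'.eigenvectorUnitary : Matrix m m ℂ) *
      Matrix.diagonal (fun i => (g (hy'.eigenvalues i) : ℂ)) *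
      star (hy'.eigenvectorUnitary : Matrix m m ℂ) := by rw [matFun, dif_pos hy']
  rw [e1, e2]
  refine le_trans this ?_
  have : N ^ 5 * ε ≤ c := by
    rw [hεd, mul_div_assoc', div_le_iff₀ (by positivity)]
    nlinarith
  gcongr

lemma dk_trace {m : Type*} [Fintype m] [DecidableEq m] (g g' : ℝ → ℝ) (x h : Matrix m m ℂ)
    (hx : x.IsHermitian) (hg : ∀ i, HasDerivAt g (g' (hx.eigenvalues i)) (hx.eigenvalues i)) :
    Matrix.trace (dkMap (hx.eigenvectorUnitary : Matrix m m ℂ)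
        (fun i k => ((dslope g (hx.eigenvalues i) (hx.eigenvalues k) : ℝ) : ℂ)) h)
      = Matrix.trace (matFun g' x * h) := by
  have hUU : star (hx.eigenvectorUnitary : Matrix m m ℂ) * hx.eigenvectorUnitary = 1 :=
    (Matrix.mem_unitaryGroup_iff').1 hx.eigenvectorUnitary.2
  rw [matFun, dif_pos hx]
  simp only [dkMap, LinearMap.coe_mk, AddHom.coe_mk]
  rw [Matrix.trace_mul_comm, ← mul_assoc, hUU, one_mul, mul_assoc, mul_assoc,
    Matrix.trace_mul_comm, mul_assoc]
  simp only [← mul_assoc]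
  simp only [Matrix.trace, Matrix.diag, Matrix.mul_diagonal, Matrix.of_apply]
  refine Finset.sum_congr rfl fun i _ => ?_
  rw [dslope_same, (hg i).deriv, mul_comm]

lemma matFun_hom {m n : Type*} [Fintype m] [DecidableEq m] [Fintype n] [DecidableEq n]
    (φ : Matrix m m ℂ →⋆ₐ[ℂ] Matrix n n ℂ) (g : ℝ → ℝ) (x : Matrix m m ℂ)
    (hx : x.IsHermitian) : matFun g (φ x) = φ (matFun g x) := by
  have hx' : (φ x).IsHermitian := by
    have : star (φ x) = φ x := by rw [← map_star, show star x = x from hx]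
    exact this
  have e1 : matFun g x = cfc g x := by
    rw [hx.cfc_eq, matFun, dif_pos hx]; rfl
  have e2 : matFun g (φ x) = cfc g (φ x) := by
    rw [hx'.cfc_eq, matFun, dif_pos hx']; rfl
  rw [e1, e2]
  have hc : Continuous φ := LinearMap.continuous_of_finiteDimensional (φ : Matrix m m ℂ →ₗ[ℂ] Matrix n n ℂ)
  symm
  refine StarAlgHom.map_cfc φ g x ?_ hc hx hx'
  have : (spectrum ℝ x).Finite := Matrix.finite_real_spectrum
  exact this.continuousOn g

lemma hasDerivAt_line {m : Type*} [Fintype m] [DecidableEq m] (g : ℝ → ℝ)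
    (a h : Matrix m m ℂ) (ha : a.IsHermitian) (hh : h.IsHermitian) (t : ℝ)
    (D : Matrix m m ℂ →L[ℂ] Matrix m m ℂ) (hD : IsFDerivMatFun g (a + t • h) D) :
    HasDerivAt (fun s : ℝ => matFun g (a + s • h)) (D h) t := by
  have h1 : HasDerivAt (fun s : ℝ => a + s • h) h t := by
    have := ((hasDerivAt_id t).smul_const h).const_add a
    rw [one_smul] at this
    exact this
  have h2 : ∀ s : ℝ, (a + s • h).IsHermitian := fun s => by
    have : (s • h).IsHermitian := by
      unfold Matrix.IsHermitian
      rw [Matrix.conjTranspose_smul, hh.eq]; simp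
    exact ha.add this
  have := HasFDerivWithinAt.comp_hasDerivAt (t := {y : Matrix m m ℂ | y.IsHermitian}) (f := fun s : ℝ => a + s • h)
    t hD h1
    (Filter.Eventually.of_forall h2)
  exact this

lemma cov {m n : Type*} [Fintype m] [DecidableEq m] [Fintype n] [DecidableEq n]
    (φ : Matrix m m ℂ →⋆ₐ[ℂ] Matrix n n ℂ) (g : ℝ → ℝ) (x h : Matrix m m ℂ)
    (hx : x.IsHermitian) (hh : h.IsHermitian)
    (D : Matrix m m ℂ →L[ℂ] Matrix m m ℂ) (hD : IsFDerivMatFun g x D)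
    (D' : Matrix n n ℂ →L[ℂ] Matrix n n ℂ) (hD' : IsFDerivMatFun g (φ x) D') :
    D' (φ h) = φ (D h) := by
  have herm : ∀ y : Matrix m m ℂ, y.IsHermitian → (φ y).IsHermitian := fun y hy => by
    have : star (φ y) = φ y := by rw [← map_star, show star y = y from hy]
    exact this
  have h1 := hasDerivAt_line g x h hx hh 0 D (by simpa using hD)
  have h2 := hasDerivAt_line g (φ x) (φ h) (herm _ hx) (herm _ hh) 0 D' (by simpa using hD')
  let L : Matrix m m ℂ →L[ℝ] Matrix n n ℂ :=
    LinearMap.toContinuousLinearMap ((φ : Matrix m m ℂ →ₗ[ℂ] Matrix n n ℂ).restrictScalars ℝ)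
  have h3 : HasDerivAt (fun s : ℝ => φ (matFun g (x + s • h))) (φ (D h)) 0 :=
    (L.hasFDerivAt.comp_hasDerivAt 0 h1)
  have e : (fun s : ℝ => φ (matFun g (x + s • h))) = fun s : ℝ => matFun g (φ x + s • φ h) := by
    funext s
    have hs : (x + s • h).IsHermitian := by
      have : (s • h).IsHermitian := by
        unfold Matrix.IsHermitian
        rw [Matrix.conjTranspose_smul, hh.eq]; simp
      exact hx.add this
    rw [← matFun_hom φ g _ hs]
    congr 1
    rw [map_add]
    congr 1
    exact map_smul L s h
  rw [e] at h3
  exact h2.unique h3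

open scoped MatrixOrder in
lemma hom_posDef {m n : Type*} [Fintype m] [DecidableEq m] [Fintype n] [DecidableEq n]
    (φ : Matrix m m ℂ →⋆ₐ[ℂ] Matrix n n ℂ) (x : Matrix m m ℂ) (hx : x.PosDef) :
    (φ x).PosDef := by
  obtain ⟨b, hb⟩ := CStarAlgebra.nonneg_iff_eq_star_mul_self.1 hx.posSemidef.nonneg
  have h1 : (φ x).PosSemidef := by
    rw [hb, map_mul, map_star]
    exact Matrix.posSemidef_conjTranspose_mul_self _
  exact h1.posDef_iff_isUnit.2 (hx.isUnit.map φ)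

/-- A derivative of the matrix function at positive definite matrices. -/
lemma exists_D {m : Type*} [Fintype m] [DecidableEq m] (g : ℝ → ℝ)
    (hg : ∀ t ∈ Set.Ioi (0 : ℝ), DifferentiableAt ℝ g t) (x : Matrix m m ℂ) (hx : x.PosDef) :
    ∃ D, IsFDerivMatFun g x D :=
  ⟨_, dk_hasFDeriv g x hx.1 fun i => hg _ (hx.eigenvalues_pos i)⟩

lemma deriv_trace {m : Type*} [Fintype m] [DecidableEq m] (g g' : ℝ → ℝ)
    (hg : ∀ t ∈ Set.Ioi (0 : ℝ), HasDerivAt g (g' t) t)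
    (a h : Matrix m m ℂ) (ha : a.IsHermitian) (hh : h.IsHermitian) (t : ℝ)
    (hp : (a + t • h).PosDef) :
    HasDerivAt (fun s : ℝ => (Matrix.trace (matFun g (a + s • h))).re)
      (Matrix.trace (matFun g' (a + t • h) * h)).re t := by
  have h1 := hasDerivAt_line g a h ha hh t _
    (dk_hasFDeriv g _ hp.1 fun i => (hg _ (hp.eigenvalues_pos i)).differentiableAt)
  let L : Matrix m m ℂ →L[ℝ] ℝ := LinearMap.toContinuousLinearMap
    (Complex.reLm ∘ₗ (Matrix.traceLinearMap m ℝ ℂ))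
  have h2 := L.hasFDerivAt.comp_hasDerivAt t h1
  have e := dk_trace g g' _ h hp.1 (fun i => hg _ (hp.eigenvalues_pos i))
  rw [← e]
  exact h2

lemma deriv_trace2 {m : Type*} [Fintype m] [DecidableEq m] (g : ℝ → ℝ)
    (a h : Matrix m m ℂ) (ha : a.IsHermitian) (hh : h.IsHermitian) (t : ℝ)
    (D : Matrix m m ℂ →L[ℂ] Matrix m m ℂ) (hD : IsFDerivMatFun g (a + t • h) D) :
    HasDerivAt (fun s : ℝ => (Matrix.trace (matFun g (a + s • h) * h)).re)
      (Matrix.trace (h * D h)).re t := by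
  have h1 := hasDerivAt_line g a h ha hh t _ hD
  let L : Matrix m m ℂ →L[ℝ] ℝ := LinearMap.toContinuousLinearMap
    (Complex.reLm ∘ₗ (Matrix.traceLinearMap m ℝ ℂ) ∘ₗ (LinearMap.mulRight ℝ h))
  have h2 := L.hasFDerivAt.comp_hasDerivAt t h1
  rw [Matrix.trace_mul_comm]
  exact h2

/-- Signed relabelling as a star homomorphism. -/
noncomputable def spHom {m n : Type*} [Fintype m] [DecidableEq m] [Fintype n] [DecidableEq n]
    (q : n ≃ m) (s : n → ℤˣ) : Matrix m m ℂ →⋆ₐ[ℂ] Matrix n n ℂ where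
  toFun ρ := Matrix.of fun i j => (((s i : ℤ) : ℂ) * ((s j : ℤ) : ℂ)) * ρ (q i) (q j)
  map_one' := by
    ext i j
    by_cases h : i = j
    · subst h
      rcases Int.units_eq_one_or (s i) with h | h <;> simp [h]
    · simp [h, Matrix.one_apply]
  map_mul' a b := by
    ext i j
    simp only [Matrix.of_apply, Matrix.mul_apply]
    rw [← Equiv.sum_comp q, Finset.mul_sum]
    refine Finset.sum_congr rfl fun k _ => ?_
    rcases Int.units_eq_one_or (s k) with h | h <;> simp [h] <;> ring
  map_zero' := by ext i j; simp
  map_add' a b := by ext i j; simp [mul_add]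
  commutes' r := by
    ext i j
    by_cases h : i = j
    · subst h
      rcases Int.units_eq_one_or (s i) with h | h <;> simp [h, Matrix.algebraMap_matrix_apply]
    · simp [h, Matrix.algebraMap_matrix_apply]
  map_star' a := by
    ext i j
    simp only [Matrix.star_apply, Matrix.of_apply, star_mul', Complex.star_def, map_intCast]
    ring

lemma spHom_apply {m n : Type*} [Fintype m] [DecidableEq m] [Fintype n] [DecidableEq n]
    (q : n ≃ m) (s : n → ℤˣ) (ρ : Matrix m m ℂ) (i j : n) :
    spHom q s ρ i j = (((s i : ℤ) : ℂ) * ((s j : ℤ) : ℂ)) * ρ (q i) (q j) := rfl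

lemma spHom_trace {m n : Type*} [Fintype m] [DecidableEq m] [Fintype n] [DecidableEq n]
    (q : n ≃ m) (s : n → ℤˣ) (ρ : Matrix m m ℂ) :
    Matrix.trace (spHom q s ρ) = Matrix.trace ρ := by
  simp only [Matrix.trace, Matrix.diag, spHom_apply]
  rw [← Equiv.sum_comp q]
  refine Finset.sum_congr rfl fun k _ => ?_
  rcases Int.units_eq_one_or (s k) with h | h <;> simp [h]

/-- `x ↦ x ⊗ 1` relabelled. -/
noncomputable def krHom {m k n : Type*} [Fintype m] [DecidableEq m] [Fintype k] [DecidableEq k]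
    [Fintype n] [DecidableEq n]
    (q : n ≃ m × k) : Matrix m m ℂ →⋆ₐ[ℂ] Matrix n n ℂ where
  toFun x := Matrix.of fun i j => if (q i).2 = (q j).2 then x (q i).1 (q j).1 else 0
  map_one' := by
    ext i j
    by_cases h : i = j
    · subst h; simp
    · have : q i ≠ q j := fun e => h (q.injective e)
      simp only [Matrix.of_apply, Matrix.one_apply, h, if_false]
      by_cases h2 : (q i).2 = (q j).2
      · have : (q i).1 ≠ (q j).1 := fun e => this (Prod.ext e h2)
        simp [this]
      · simp [h2]
  map_mul' a b := by
    ext i j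
    simp only [Matrix.of_apply, Matrix.mul_apply]
    rw [Equiv.sum_comp q (fun z : m × k => (if (q i).2 = z.2 then a (q i).1 z.1 else 0) *
      (if z.2 = (q j).2 then b z.1 (q j).1 else 0)), Fintype.sum_prod_type]
    split_ifs with h
    · refine Finset.sum_congr rfl fun z _ => ?_
      simp [h]
    · symm
      refine Finset.sum_eq_zero fun z _ => ?_
      simp
      intro h'
      exact absurd h' h
  map_zero' := by ext i j; simp
  map_add' a b := by
    ext i j
    simp only [Matrix.of_apply, Matrix.add_apply]
    split_ifs <;> simp
  commutes' r := by
    ext i j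
    by_cases h : i = j
    · subst h; simp [Matrix.algebraMap_matrix_apply]
    · have : q i ≠ q j := fun e => h (q.injective e)
      simp only [Matrix.of_apply, Matrix.algebraMap_matrix_apply, h, if_false]
      by_cases h2 : (q i).2 = (q j).2
      · have : (q i).1 ≠ (q j).1 := fun e => this (Prod.ext e h2)
        simp [this]
      · simp [h2]
  map_star' a := by
    ext i j
    simp only [Matrix.star_apply, Matrix.of_apply]
    by_cases h2 : (q i).2 = (q j).2
    · simp [h2]
    · have : ¬ (q j).2 = (q i).2 := fun e => h2 e.symm
      simp [h2, this]

lemma krHom_apply {m k n : Type*} [Fintype m] [DecidableEq m] [Fintype k] [DecidableEq k]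
    [Fintype n] [DecidableEq n] (q : n ≃ m × k) (x : Matrix m m ℂ) (i j : n) :
    krHom q x i j = if (q i).2 = (q j).2 then x (q i).1 (q j).1 else 0 := rfl

lemma krHom_trace {m k n : Type*} [Fintype m] [DecidableEq m] [Fintype k] [DecidableEq k]
    [Fintype n] [DecidableEq n] (q : n ≃ m × k) (x : Matrix m m ℂ) :
    Matrix.trace (krHom q x) = Fintype.card k * Matrix.trace x := by
  simp only [Matrix.trace, Matrix.diag, krHom_apply, if_true]
  rw [Equiv.sum_comp q (fun z : m × k => x z.1 z.1), Fintype.sum_prod_type]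
  simp [Finset.mul_sum]

lemma rad_sum {k : Type*} [Fintype k] [DecidableEq k] (a b : k) :
    ∑ s : k → ℤˣ, ((s a : ℤ) : ℂ) * ((s b : ℤ) : ℂ)
      = if a = b then (Fintype.card (k → ℤˣ) : ℂ) else 0 := by
  split_ifs with h
  · subst h
    have : ∀ s : k → ℤˣ, ((s a : ℤ) : ℂ) * ((s a : ℤ) : ℂ) = 1 := by
      intro s
      rcases Int.units_eq_one_or (s a) with h | h <;> simp [h]
    simp [this]
  · have h1 := Equiv.sum_comp (Equiv.mulLeft (Pi.mulSingle a (-1) : k → ℤˣ))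
      (fun s : k → ℤˣ => ((s a : ℤ) : ℂ) * ((s b : ℤ) : ℂ))
    have h2 : ∀ s : k → ℤˣ, (((Equiv.mulLeft (Pi.mulSingle a (-1) : k → ℤˣ) s) a : ℤ) : ℂ) *
        (((Equiv.mulLeft (Pi.mulSingle a (-1) : k → ℤˣ) s) b : ℤ) : ℂ)
        = - (((s a : ℤ) : ℂ) * ((s b : ℤ) : ℂ)) := by
      intro s
      have hb : (Pi.mulSingle a (-1) : k → ℤˣ) b = 1 := Pi.mulSingle_eq_of_ne (Ne.symm h) _
      simp [hb]
    simp only [h2, Finset.sum_neg_distrib] at h1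
    linear_combination (-1/2) * h1

/-- Signed cyclic relabelling on the second factor. -/
noncomputable def twHom {m k n : Type*} [Fintype m] [DecidableEq m] [Fintype k] [DecidableEq k]
    [Fintype n] [DecidableEq n] [NeZero (Fintype.card k)] (q : n ≃ m × k)
    (u : (k → ℤˣ) × Fin (Fintype.card k)) : Matrix (m × k) (m × k) ℂ →⋆ₐ[ℂ] Matrix n n ℂ :=
  spHom (q.trans (Equiv.prodCongr (Equiv.refl m)
    (((Fintype.equivFin k).trans (Equiv.addRight u.2)).trans (Fintype.equivFin k).symm)))
    (fun i => u.1 (q i).2)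

lemma twirl {m k n : Type*} [Fintype m] [DecidableEq m] [Fintype k] [DecidableEq k]
    [Fintype n] [DecidableEq n] [NeZero (Fintype.card k)] (q : n ≃ m × k)
    (ρ : Matrix (m × k) (m × k) ℂ) :
    ∑ u : (k → ℤˣ) × Fin (Fintype.card k), twHom q u ρ
      = (Fintype.card (k → ℤˣ) : ℂ) • krHom q (ptrace ρ) := by
  ext i j
  rw [Matrix.sum_apply, Fintype.sum_prod_type_right, Matrix.smul_apply, krHom_apply]
  simp only [twHom, spHom_apply]
  simp only [← Finset.sum_mul, rad_sum]
  by_cases h : (q i).2 = (q j).2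
  · simp only [h, if_true, ← Finset.mul_sum, smul_eq_mul]
    congr 1
    simp only [ptrace, Matrix.of_apply]
    rw [← Equiv.sum_comp ((Equiv.addLeft (Fintype.equivFin k (q j).2)).trans (Fintype.equivFin k).symm)]
    refine Finset.sum_congr rfl fun a _ => ?_
    simp [Prod.map, h]
  · simp [h]

lemma ptrace_posDef {m k : Type*} [Fintype m] [DecidableEq m] [Fintype k] [DecidableEq k]
    [Nonempty k] (ρ : Matrix (m × k) (m × k) ℂ) (hρ : ρ.PosDef) : (ptrace ρ).PosDef := by
  have : ptrace ρ = ∑ c : k, ρ.submatrix (fun i => (i, c)) (fun i => (i, c)) := by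
    ext i j
    simp [ptrace, Matrix.sum_apply]
  rw [this]
  refine Matrix.posDef_sum Finset.univ_nonempty fun c _ => hρ.submatrix ?_
  intro a b h
  simpa using h

lemma ptrace_herm {m k : Type*} [Fintype k]
    (ρ : Matrix (m × k) (m × k) ℂ) (hρ : ρ.IsHermitian) : (ptrace ρ).IsHermitian := by
  ext i j
  simp only [ptrace, Matrix.conjTranspose_apply, Matrix.of_apply, star_sum]
  exact Finset.sum_congr rfl fun c _ => hρ.apply _ _

lemma hom_herm {m n : Type*} [Fintype m] [DecidableEq m] [Fintype n] [DecidableEq n]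
    (φ : Matrix m m ℂ →⋆ₐ[ℂ] Matrix n n ℂ) (y : Matrix m m ℂ) (hy : y.IsHermitian) :
    (φ y).IsHermitian := by
  have : star (φ y) = φ y := by rw [← map_star, show star y = y from hy]
  exact this

lemma second_ineq {m k : Type*} [Fintype m] [DecidableEq m] [Fintype k] [DecidableEq k]
    [Nonempty k] (f f' : ℝ → ℝ) (hf : IsMatrixEntropy f f')
    (hd : ∀ t ∈ Set.Ioi (0 : ℝ), DifferentiableAt ℝ f' t)
    (ρ h : Matrix (m × k) (m × k) ℂ) (hρ : ρ.PosDef) (hh : h.IsHermitian)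
    (D₁ : Matrix (m × k) (m × k) ℂ →L[ℂ] Matrix (m × k) (m × k) ℂ)
    (D₂ : Matrix m m ℂ →L[ℂ] Matrix m m ℂ)
    (h₁ : IsFDerivMatFun f' ((Fintype.card k : ℂ) • ρ) D₁)
    (h₂ : IsFDerivMatFun f' (ptrace ρ) D₂) :
    (Matrix.trace (ptrace h * D₂ (ptrace h))).re
      ≤ (Fintype.card k : ℝ) * (Matrix.trace (h * D₁ h)).re := by
  haveI : NeZero (Fintype.card k) := ⟨Fintype.card_ne_zero⟩
  set d := Fintype.card k with hdd
  have hd0 : 0 < (d : ℝ) := by exact_mod_cast Fintype.card_pos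
  set K := Fintype.card (k → ℤˣ) with hK
  have hK0 : 0 < (K : ℝ) := by
    have : 0 < K := Fintype.card_pos
    exact_mod_cast this
  obtain ⟨N, ⟨e⟩⟩ : ∃ N, Nonempty (Fin N ≃ m × k) := ⟨_, ⟨(Fintype.equivFin (m × k)).symm⟩⟩
  have hex : ∀ x : Matrix (Fin N) (Fin N) ℂ, ∃ D, x.PosDef → IsFDerivMatFun f' x D := by
    intro x
    by_cases hx : x.PosDef
    · obtain ⟨D, hD⟩ := exists_D f' hd x hx
      exact ⟨D, fun _ => hD⟩
    · exact ⟨0, fun h => absurd h hx⟩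
  choose D hD using hex
  have hconv := hf.2.2 N D hD
  have hdρ : ((d : ℂ) • ρ).PosDef := by
    refine hρ.smul ?_
    exact_mod_cast Fintype.card_pos (α := k)
  have hdh : ((d : ℂ) • h).IsHermitian := by
    unfold Matrix.IsHermitian
    rw [Matrix.conjTranspose_smul, hh.eq]; simp
  have J := hconv.map_sum_le (t := (Finset.univ : Finset ((k → ℤˣ) × Fin (Fintype.card k))))
    (w := fun _ => ((K : ℝ) * d)⁻¹)
    (p := fun u => (twHom e u ((d : ℂ) • ρ), twHom e u ((d : ℂ) • h)))
    (fun _ _ => by positivity)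
    (by
      rw [Finset.sum_const, Finset.card_univ, Fintype.card_prod, Fintype.card_fin, ← hK, ← hdd,
        nsmul_eq_mul]
      push_cast
      field_simp)
    (fun u _ => hom_posDef _ _ hdρ)
  have avg : ∀ a : Matrix (m × k) (m × k) ℂ,
      ∑ u : (k → ℤˣ) × Fin (Fintype.card k), ((K : ℝ) * d)⁻¹ • twHom e u ((d : ℂ) • a)
      = krHom e (ptrace a) := by
    intro a
    rw [← Finset.smul_sum]
    simp only [map_smul]
    rw [← Finset.smul_sum, twirl, ← hK]
    ext i j
    simp only [Matrix.smul_apply, smul_eq_mul, Complex.real_smul]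
    push_cast
    have : (K : ℂ) ≠ 0 := by exact_mod_cast hK0.ne'
    have : (d : ℂ) ≠ 0 := by exact_mod_cast hd0.ne'
    field_simp
  have avg2 : ∑ u : (k → ℤˣ) × Fin (Fintype.card k), ((K : ℝ) * d)⁻¹ •
      ((twHom e u ((d : ℂ) • ρ), twHom e u ((d : ℂ) • h)) :
        Matrix (Fin N) (Fin N) ℂ × Matrix (Fin N) (Fin N) ℂ)
      = (krHom e (ptrace ρ), krHom e (ptrace h)) := by
    rw [← avg ρ, ← avg h]
    ext1
    · rw [Prod.fst_sum]; rfl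
    · rw [Prod.snd_sum]; rfl
  rw [avg2] at J
  have hp1 := ptrace_posDef ρ hρ
  have hp2 := ptrace_herm h hh
  have L : (Matrix.trace ((krHom e (ptrace h))ᴴ * (D (krHom e (ptrace ρ))) (krHom e (ptrace h)))).re
      = d * (Matrix.trace (ptrace h * D₂ (ptrace h))).re := by
    rw [cov (krHom e) f' (ptrace ρ) (ptrace h) hp1.1 hp2 D₂ h₂ _ (hD _ (hom_posDef _ _ hp1)),
      (hom_herm _ _ hp2).eq, ← map_mul, krHom_trace, ← hdd]
    simp
  have Rr : ∀ u, (Matrix.trace ((twHom e u ((d : ℂ) • h))ᴴ *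
      (D (twHom e u ((d : ℂ) • ρ))) (twHom e u ((d : ℂ) • h)))).re
      = d ^ 2 * (Matrix.trace (h * D₁ h)).re := by
    intro u
    rw [cov (twHom e u) f' _ _ hdρ.1 hdh D₁ h₁ _ (hD _ (hom_posDef _ _ hdρ)),
      (hom_herm _ _ hdh).eq, ← map_mul, twHom, spHom_trace, map_smul]
    rw [Matrix.smul_mul, Matrix.mul_smul, smul_smul, Matrix.trace_smul, smul_eq_mul]
    have : (d : ℂ) * d = ((d ^ 2 : ℝ) : ℂ) := by push_cast; ring
    rw [this, Complex.re_ofReal_mul]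
  simp only [] at J
  rw [L] at J
  simp only [Rr] at J
  rw [Finset.sum_const, Finset.card_univ, Fintype.card_prod, Fintype.card_fin, ← hK, ← hdd,
        nsmul_eq_mul, smul_eq_mul] at J
  push_cast at J
  rw [← mul_assoc, mul_inv_cancel₀ (by positivity), one_mul, pow_two, mul_assoc] at J
  exact le_of_mul_le_mul_left J hd0

lemma ptrace_line {m k : Type*} [Fintype k] (a b : Matrix (m × k) (m × k) ℂ) (t : ℝ) :
    ptrace (a + t • b) = ptrace a + t • ptrace b := by
  ext i j
  simp [ptrace, Finset.sum_add_distrib, Finset.mul_sum]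

end Helpers

/-- If `f` is a matrix entropy, then
`G(ρ) = d₂⁻¹ · Tr₁₂ f(d₂ρ) − Tr₁ f(ρ₁)` is convex on the positive definite operators on
`H = H₁ ⊗ H₂`, where `ρ₁ = Tr₂ ρ` and `d₂ = dim H₂`. -/
theorem matrixEntropy_sub_partialTrace_convex
    {ι₁ ι₂ : Type*} [Fintype ι₁] [DecidableEq ι₁] [Fintype ι₂] [DecidableEq ι₂]
    (f f' : ℝ → ℝ) (hf : IsMatrixEntropy f f')
    (d₂ : ℕ) (hd₂ : d₂ = Fintype.card ι₂) :
    ConvexOn ℝ {ρ : Matrix (ι₁ × ι₂) (ι₁ × ι₂) ℂ | ρ.PosDef}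
      (fun ρ => (d₂ : ℝ)⁻¹ * (Matrix.trace (matFun f ((d₂ : ℂ) • ρ))).re
        - (Matrix.trace (matFun f (ptrace ρ))).re) := by
  obtain hk | hk := isEmpty_or_nonempty ι₂
  · refine ⟨?_, ?_⟩
    · intro x hx y hy a b ha hb hab
      have : a • x + b • y = x := by ext i; exact hk.elim i.2
      rw [this]; exact hx
    · intro x hx y hy a b ha hb hab
      have h1 : y = x := by ext i; exact hk.elim i.2
      have h2 : a • x + b • x = x := by ext i; exact hk.elim i.2
      subst h1
      rw [h2, ← add_smul, hab, one_smul]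
  have hd : ∀ t ∈ Set.Ioi (0 : ℝ), DifferentiableAt ℝ f' t := by
    intro t ht
    have h1 : ContDiffOn ℝ 1 (deriv f) (Set.Ioi 0) :=
      ((contDiffOn_succ_iff_deriv_of_isOpen (n := 1) isOpen_Ioi).1 hf.1).2.2
    have h2 : DifferentiableAt ℝ (deriv f) t :=
      (h1.differentiableOn (by norm_num)).differentiableAt (isOpen_Ioi.mem_nhds ht)
    refine h2.congr_of_eventuallyEq ?_
    filter_upwards [isOpen_Ioi.mem_nhds ht] with s hs
    exact ((hf.2.1 s hs).deriv).symm
  have hconvset : Convex ℝ {ρ : Matrix (ι₁ × ι₂) (ι₁ × ι₂) ℂ | ρ.PosDef} := by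
    intro x hx y hy a b ha hb hab
    have hx' : x.PosDef := hx
    have hy' : y.PosDef := hy
    have sm : ∀ (c : ℝ) (z : Matrix (ι₁ × ι₂) (ι₁ × ι₂) ℂ), 0 < c → z.PosDef → (c • z).PosDef := by
      intro c z hc hz
      exact hz.smul hc
    rcases ha.eq_or_lt with h | h
    · subst h
      rw [zero_add] at hab
      subst hab
      simpa using hy'
    rcases hb.eq_or_lt with h' | h'
    · subst h'
      rw [add_zero] at hab
      subst hab
      simpa using hx'
    exact (sm a x h hx').add (sm b y h' hy')
  refine ⟨hconvset, ?_⟩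
  intro x hx y hy a b ha hb hab
  have hx' : x.PosDef := hx
  have hy' : y.PosDef := hy
  have hd0 : (0 : ℝ) < d₂ := by
    rw [hd₂]; exact_mod_cast Fintype.card_pos
  set h := y - x with hh
  have hherm : h.IsHermitian := hy'.1.sub hx'.1
  have hpos : ∀ t ∈ Set.Icc (0 : ℝ) 1, (x + t • h).PosDef := by
    intro t ht
    have := hconvset hx hy (sub_nonneg.2 ht.2) ht.1 (by ring)
    have e : x + t • h = (1 - t) • x + t • y := by
      rw [hh, smul_sub, sub_smul, one_smul]; abel
    rw [e]; exact this
  have hdpos : ∀ z : Matrix (ι₁ × ι₂) (ι₁ × ι₂) ℂ, z.PosDef → ((d₂ : ℂ) • z).PosDef := by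
    intro z hz
    refine hz.smul ?_
    exact_mod_cast hd0
  have hdherm : ((d₂ : ℂ) • h).IsHermitian := by
    unfold Matrix.IsHermitian
    rw [Matrix.conjTranspose_smul, hherm.eq]; simp
  have hline : ∀ t : ℝ, (d₂ : ℂ) • (x + t • h) = (d₂ : ℂ) • x + t • ((d₂ : ℂ) • h) := by
    intro t
    rw [smul_add, smul_comm]
  have hex1 : ∀ t : ℝ, ∃ D, t ∈ Set.Icc (0 : ℝ) 1 →
      IsFDerivMatFun f' ((d₂ : ℂ) • (x + t • h)) D := by
    intro t
    by_cases ht : t ∈ Set.Icc (0 : ℝ) 1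
    · obtain ⟨D, hD⟩ := exists_D f' hd _ (hdpos _ (hpos t ht))
      exact ⟨D, fun _ => hD⟩
    · exact ⟨0, fun h => absurd h ht⟩
  have hex2 : ∀ t : ℝ, ∃ D, t ∈ Set.Icc (0 : ℝ) 1 →
      IsFDerivMatFun f' (ptrace (x + t • h)) D := by
    intro t
    by_cases ht : t ∈ Set.Icc (0 : ℝ) 1
    · obtain ⟨D, hD⟩ := exists_D f' hd _ (ptrace_posDef _ (hpos t ht))
      exact ⟨D, fun _ => hD⟩
    · exact ⟨0, fun h => absurd h ht⟩
  choose D1 hD1 using hex1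
  choose D2 hD2 using hex2
  set G : ℝ → ℝ := fun t => (d₂ : ℝ)⁻¹ *
      (Matrix.trace (matFun f ((d₂ : ℂ) • x + t • ((d₂ : ℂ) • h)))).re
        - (Matrix.trace (matFun f (ptrace x + t • ptrace h))).re with hG
  have hG1 : ∀ t ∈ Set.Icc (0 : ℝ) 1, HasDerivAt G ((d₂ : ℝ)⁻¹ *
      (Matrix.trace (matFun f' ((d₂ : ℂ) • x + t • ((d₂ : ℂ) • h)) * ((d₂ : ℂ) • h))).re
        - (Matrix.trace (matFun f' (ptrace x + t • ptrace h) * ptrace h)).re) t := by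
    intro t ht
    refine HasDerivAt.sub (HasDerivAt.const_mul _ ?_) ?_
    · refine deriv_trace f f' hf.2.1 _ _ (hdpos _ hx').1 hdherm t ?_
      rw [← hline]; exact hdpos _ (hpos t ht)
    · refine deriv_trace f f' hf.2.1 _ _ (ptrace_posDef _ hx').1 (ptrace_herm _ hherm) t ?_
      rw [← ptrace_line]; exact ptrace_posDef _ (hpos t ht)
  have hG2 : ∀ t ∈ Set.Icc (0 : ℝ) 1, HasDerivAt (fun t : ℝ => (d₂ : ℝ)⁻¹ *
      (Matrix.trace (matFun f' ((d₂ : ℂ) • x + t • ((d₂ : ℂ) • h)) * ((d₂ : ℂ) • h))).re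
        - (Matrix.trace (matFun f' (ptrace x + t • ptrace h) * ptrace h)).re)
      ((d₂ : ℝ)⁻¹ * (Matrix.trace (((d₂ : ℂ) • h) * D1 t ((d₂ : ℂ) • h))).re
        - (Matrix.trace (ptrace h * D2 t (ptrace h))).re) t := by
    intro t ht
    refine HasDerivAt.sub (HasDerivAt.const_mul _ ?_) ?_
    · refine deriv_trace2 f' _ _ (hdpos _ hx').1 hdherm t _ ?_
      rw [← hline]; exact hD1 t ht
    · refine deriv_trace2 f' _ _ (ptrace_posDef _ hx').1 (ptrace_herm _ hherm) t _ ?_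
      rw [← ptrace_line]; exact hD2 t ht
  have hGc : ConvexOn ℝ (Set.Icc (0 : ℝ) 1) G := by
    refine convexOn_of_hasDerivWithinAt2_nonneg (convex_Icc 0 1)
      (fun t ht => (hG1 t ht).continuousAt.continuousWithinAt)
      (fun t ht => (hG1 t (interior_subset ht)).hasDerivWithinAt)
      (fun t ht => (hG2 t (interior_subset ht)).hasDerivWithinAt) ?_
    intro t ht
    have ht' := interior_subset ht
    have := second_ineq f f' hf hd (x + t • h) h (hpos t ht') hherm (D1 t) (D2 t)
      (by rw [← hd₂]; exact hD1 t ht') (hD2 t ht')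
    rw [← hd₂] at this
    rw [map_smul, Matrix.smul_mul, Matrix.mul_smul, smul_smul, Matrix.trace_smul, smul_eq_mul]
    have e : (d₂ : ℂ) * d₂ = ((d₂ * d₂ : ℝ) : ℂ) := by push_cast; ring
    rw [e, Complex.re_ofReal_mul, ← mul_assoc, ← mul_assoc, inv_mul_cancel₀ hd0.ne', one_mul]
    linarith
  have fin := hGc.2 (x := 0) (by simp) (y := 1) (by simp) ha hb hab
  have eG : ∀ t : ℝ, G t = (d₂ : ℝ)⁻¹ * (Matrix.trace (matFun f ((d₂ : ℂ) • (x + t • h)))).re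
        - (Matrix.trace (matFun f (ptrace (x + t • h)))).re := by
    intro t
    rw [hG, hline, ptrace_line]
  rw [eG, eG, eG] at fin
  have e0 : x + (0 : ℝ) • h = x := by simp
  have e1 : x + (1 : ℝ) • h = y := by rw [hh]; simp
  have e2 : x + (a • (0 : ℝ) + b • (1 : ℝ)) • h = a • x + b • y := by
    have : a = 1 - b := by linarith
    subst this
    rw [hh]
    simp only [smul_eq_mul, mul_zero, mul_one, zero_add]
    rw [smul_sub, sub_smul, one_smul]; abel
  rw [e0, e1, e2] at fin
  exact fin
end

section
/- Let f : (0,∞) → ℝ be a matrix entropy and let Φ be a map on n×n matrices of the form Φ(x) = Σᵢ pᵢ uᵢ* x uᵢ, where u₁,…,u_m are unitary n×n matrices and p₁,…,p_m are non-negative real weights summing to one. Then for every positive definite n×n matrix x and every n×n matrix h, Tr( Φ(h)* · Df'(Φ(x)) Φ(h) ) ≤ Tr( h* · Df'(x) h ). -/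
open Matrix
open scoped ComplexOrder

attribute [local instance] Matrix.normedAddCommGroup Matrix.normedSpace

section Helpers

open Filter Topology

theorem matFun_eq_cfc {n : ℕ} (g : ℝ → ℝ) {x : Matrix (Fin n) (Fin n) ℂ} (hx : x.IsHermitian) :
    matFun g x = cfc g x := by
  rw [hx.cfc_eq, matFun, dif_pos hx, Matrix.IsHermitian.cfc, Unitary.conjStarAlgAut_apply]
  rfl

theorem spectrum_finite_aux {n : ℕ} {x : Matrix (Fin n) (Fin n) ℂ} (hx : x.IsHermitian)
    (g : ℝ → ℝ) : ContinuousOn g (spectrum ℝ x) := by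
  rw [hx.spectrum_real_eq_range_eigenvalues]
  exact (Set.finite_range _).continuousOn g

section L2
open scoped Matrix.Norms.L2Operator

theorem continuousOn_cfc_l2 (n : ℕ) (g : ℝ → ℝ) (hg : ContinuousOn g (Set.Ioi 0)) :
    ContinuousOn (fun a : Matrix (Fin n) (Fin n) ℂ => cfc g a)
      {a | IsSelfAdjoint a ∧ Set.Ioi (0 : ℝ) ∈ 𝓝ˢ (spectrum ℝ a)} :=
  ContinuousOn.cfc_of_mem_nhdsSet (A := Matrix (Fin n) (Fin n) ℂ) (s := Set.Ioi (0 : ℝ))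
    (f := g) (a := fun a => a)
    (hs := isOpen_Ioi.mem_nhdsSet.2
      (Set.iUnion₂_subset fun _ hx => subset_of_mem_nhdsSet hx.2))
    (ha_cont := continuousOn_id) (ha' := fun _ hx => hx.1) (hf := hg)

theorem isOpen_pos_l2 (n : ℕ) :
    IsOpen {a : Matrix (Fin n) (Fin n) ℂ | Set.Ioi (0 : ℝ) ∈ 𝓝ˢ (spectrum ℝ a)} :=
  (upperHemicontinuous_spectrum ℝ (Matrix (Fin n) (Fin n) ℂ)).isOpen _

end L2

theorem tendsto_cfc_posDef {n : ℕ} (g : ℝ → ℝ) (hg : ContinuousOn g (Set.Ioi 0))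
    {x : Matrix (Fin n) (Fin n) ℂ} (hx : x.PosDef) :
    Tendsto (fun a : Matrix (Fin n) (Fin n) ℂ => cfc g a)
      (𝓝[{y : Matrix (Fin n) (Fin n) ℂ | y.IsHermitian}] x) (𝓝 (cfc g x)) := by
  have hmem : Set.Ioi (0 : ℝ) ∈ 𝓝ˢ (spectrum ℝ x) := by
    rw [isOpen_Ioi.mem_nhdsSet, hx.1.spectrum_real_eq_range_eigenvalues]
    rintro _ ⟨i, rfl⟩
    exact hx.eigenvalues_pos i
  have h1 := continuousOn_cfc_l2 n g hg x ⟨hx.1, hmem⟩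
  have h2 := (isOpen_pos_l2 n).mem_nhds hmem
  refine Tendsto.mono_left h1 ?_
  refine le_trans ?_ (nhdsWithin_inter_of_mem' (mem_nhdsWithin_of_mem_nhds h2)).ge
  exact le_of_eq rfl

theorem norm_mul_le_card {n : ℕ} (A B : Matrix (Fin n) (Fin n) ℂ) :
    ‖A * B‖ ≤ n * (‖A‖ * ‖B‖) := by
  rw [Matrix.norm_le_iff (by positivity)]
  intro i j
  rw [Matrix.mul_apply]
  calc ‖∑ k, A i k * B k j‖ ≤ ∑ k : Fin n, ‖A‖ * ‖B‖ := by
        refine (norm_sum_le _ _).trans (Finset.sum_le_sum fun k _ => ?_)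
        rw [norm_mul]
        exact mul_le_mul (Matrix.norm_entry_le_entrywise_sup_norm A)
          (Matrix.norm_entry_le_entrywise_sup_norm B) (norm_nonneg _) (norm_nonneg _)
    _ = n * (‖A‖ * ‖B‖) := by simp

/-- Two-sided multiplication as a continuous linear map. -/
noncomputable def twoMul {n : ℕ} (a b : Matrix (Fin n) (Fin n) ℂ) :
    Matrix (Fin n) (Fin n) ℂ →L[ℂ] Matrix (Fin n) (Fin n) ℂ :=
  LinearMap.toContinuousLinearMap ((LinearMap.mulRight ℂ b).comp (LinearMap.mulLeft ℂ a))

theorem twoMul_apply {n : ℕ} (a b h : Matrix (Fin n) (Fin n) ℂ) : twoMul a b h = a * h * b := rfl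

theorem sub_eq_aux {n : ℕ} (g : ℝ → ℝ) {y : Matrix (Fin n) (Fin n) ℂ} (hy : y.IsHermitian)
    (t : ℝ) : cfc g y - (g t : ℂ) • 1 = cfc (dslope g t) y * (y - (t : ℂ) • 1) := by
  have hy' : IsSelfAdjoint y := hy
  have e : (fun s => dslope g t s * (s - t)) = fun s => g s - g t := by
    funext s
    have := sub_smul_dslope g t s
    rw [smul_eq_mul] at this
    rw [← this, mul_comm]
  have c : ∀ g : ℝ → ℝ, ContinuousOn g (spectrum ℝ y) := spectrum_finite_aux hy
  have h1 : cfc (fun s => s - t) y = y - (t : ℂ) • 1 := by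
    rw [cfc_sub (fun s => s) (fun _ => t) y (c _) (c _), cfc_id' ℝ y, cfc_const t y]
    rw [Algebra.algebraMap_eq_smul_one]; congr 1
  have h2 : cfc (fun s => g s - g t) y = cfc g y - (g t : ℂ) • 1 := by
    rw [cfc_sub g (fun _ => g t) y (c _) (c _), cfc_const (g t) y]
    rw [Algebra.algebraMap_eq_smul_one]; congr 1
  rw [← h1, ← h2, ← cfc_mul _ _ y (c _) (c _), e]

theorem exists_deriv {n : ℕ} (g : ℝ → ℝ) (hg : ∀ t ∈ Set.Ioi (0 : ℝ), DifferentiableAt ℝ g t)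
    (x : Matrix (Fin n) (Fin n) ℂ) (hx : x.PosDef) :
    ∃ D : Matrix (Fin n) (Fin n) ℂ →L[ℂ] Matrix (Fin n) (Fin n) ℂ, IsFDerivMatFun g x D := by
  have hH := hx.1
  let U : Matrix (Fin n) (Fin n) ℂ := hH.eigenvectorUnitary
  have hUU : U * star U = 1 := Unitary.coe_mul_star_self hH.eigenvectorUnitary
  have hUU' : star U * U = 1 := Unitary.coe_star_mul_self hH.eigenvectorUnitary
  let l := hH.eigenvalues
  let P : Fin n → Matrix (Fin n) (Fin n) ℂ := fun i =>
    U * Matrix.diagonal (Pi.single i 1) * star U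
  have hP1 : ∑ i, P i = 1 := by
    have : ∑ i : Fin n, Matrix.diagonal (Pi.single i (1 : ℂ)) = (1 : Matrix (Fin n) (Fin n) ℂ) := by
      ext a b
      simp [Matrix.sum_apply, Matrix.diagonal_apply, Matrix.one_apply, Pi.single_apply]
    simp only [P]
    rw [← Finset.sum_mul, ← Finset.mul_sum, this, mul_one, hUU]
  have hPg : ∀ (g : ℝ → ℝ) i, cfc g x * P i = (g (l i) : ℂ) • P i := by
    intro g i
    have hd : Matrix.diagonal (fun j => (g (l j) : ℂ)) * Matrix.diagonal (Pi.single i (1 : ℂ))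
        = (g (l i) : ℂ) • Matrix.diagonal (Pi.single i (1 : ℂ)) := by
      rw [Matrix.diagonal_mul_diagonal, ← Matrix.diagonal_smul]
      congr 1
      funext j
      by_cases hj : j = i
      · subst hj; simp
      · simp [hj]
    rw [← matFun_eq_cfc g hH, matFun, dif_pos hH]
    change U * Matrix.diagonal (fun j => (g (l j) : ℂ)) * star U *
      (U * Matrix.diagonal (Pi.single i 1) * star U) = _
    calc _ = U * Matrix.diagonal (fun j => (g (l j) : ℂ)) * (star U * U) *
          Matrix.diagonal (Pi.single i 1) * star U := by simp only [mul_assoc]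
      _ = U * (Matrix.diagonal (fun j => (g (l j) : ℂ)) *
          Matrix.diagonal (Pi.single i 1)) * star U := by rw [hUU']; simp only [mul_assoc, one_mul]
      _ = _ := by rw [hd]; simp only [P, Matrix.mul_smul, Matrix.smul_mul]
  have hPx : ∀ i, x * P i = (l i : ℂ) • P i := by
    intro i
    have := hPg (fun s => s) i
    have hid : cfc (fun s : ℝ => s) x = x := cfc_id' ℝ x hH
    rwa [hid] at this
  have key : ∀ y : Matrix (Fin n) (Fin n) ℂ, y.IsHermitian → cfc g y - cfc g x =
      ∑ i, cfc (dslope g (l i)) y * (y - x) * P i := by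
    intro y hy
    calc cfc g y - cfc g x = ∑ i, (cfc g y - cfc g x) * P i := by
          rw [← Finset.mul_sum, hP1, mul_one]
      _ = _ := by
          refine Finset.sum_congr rfl fun i _ => ?_
          have h1 : (cfc g y - cfc g x) * P i = (cfc g y - (g (l i) : ℂ) • 1) * P i := by
            rw [sub_mul, hPg, sub_mul, Matrix.smul_mul, one_mul]
          have h2 : (y - x) * P i = (y - (l i : ℂ) • 1) * P i := by
            rw [sub_mul, hPx, sub_mul, Matrix.smul_mul, one_mul]
          rw [h1, sub_eq_aux g hy, mul_assoc, mul_assoc, h2]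
  refine ⟨∑ i, twoMul (cfc (dslope g (l i)) x) (P i), ?_⟩
  refine hasFDerivWithinAt_iff_isLittleO.2 ?_
  have hlim : ∀ i, (fun y : Matrix (Fin n) (Fin n) ℂ =>
      (cfc (dslope g (l i)) y - cfc (dslope g (l i)) x) * (y - x) * P i)
      =o[𝓝[{y : Matrix (Fin n) (Fin n) ℂ | y.IsHermitian}] x] fun y => y - x := by
    intro i
    have hpos : 0 < l i := hx.eigenvalues_pos i
    have hc : ContinuousOn (dslope g (l i)) (Set.Ioi 0) := by
      rw [continuousOn_dslope (Ioi_mem_nhds hpos)]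
      exact ⟨fun t ht => (hg t ht).continuousAt.continuousWithinAt, hg _ hpos⟩
    have ht := (tendsto_cfc_posDef _ hc hx)
    have ht2 : Tendsto (fun y : Matrix (Fin n) (Fin n) ℂ =>
        (n * (n * ‖P i‖)) * ‖cfc (dslope g (l i)) y - cfc (dslope g (l i)) x‖)
        (𝓝[{y : Matrix (Fin n) (Fin n) ℂ | y.IsHermitian}] x) (𝓝 0) := by
      have := (tendsto_iff_norm_sub_tendsto_zero.1 ht).const_mul (n * (n * ‖P i‖))
      simpa using this
    rw [Asymptotics.isLittleO_iff]
    intro c hc0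
    filter_upwards [ht2.eventually (gt_mem_nhds hc0)] with y hy
    refine (norm_mul_le_card _ _).trans ?_
    have h1 := norm_mul_le_card (cfc (dslope g (l i)) y - cfc (dslope g (l i)) x) (y - x)
    calc (n : ℝ) * (‖(cfc (dslope g (l i)) y - cfc (dslope g (l i)) x) * (y - x)‖ * ‖P i‖)
        ≤ n * ((n * (‖cfc (dslope g (l i)) y - cfc (dslope g (l i)) x‖ * ‖y - x‖)) * ‖P i‖) := by
          gcongr
      _ = ((n * (n * ‖P i‖)) * ‖cfc (dslope g (l i)) y - cfc (dslope g (l i)) x‖) * ‖y - x‖ := by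
          ring
      _ ≤ c * ‖y - x‖ := by gcongr
  have hs := Asymptotics.IsLittleO.sum (s := Finset.univ) fun i _ => hlim i
  refine hs.congr' ?_ EventuallyEq.rfl
  filter_upwards [self_mem_nhdsWithin] with y hy
  have happ : ∀ z, (∑ i, twoMul (cfc (dslope g (l i)) x) (P i)) z =
      ∑ i, cfc (dslope g (l i)) x * z * P i := by
    intro z
    rw [_root_.sum_apply]
    rfl
  change _ = matFun g y - matFun g x - (∑ i, twoMul (cfc (dslope g (l i)) x) (P i)) (y - x)
  rw [happ, matFun_eq_cfc g hy, matFun_eq_cfc g hH, key y hy, ← Finset.sum_sub_distrib,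
    Finset.sum_apply]
  simp only [sub_mul]

theorem deriv_unique {n : ℕ} {g : ℝ → ℝ} {x : Matrix (Fin n) (Fin n) ℂ} (hx : x.IsHermitian)
    {D E : Matrix (Fin n) (Fin n) ℂ →L[ℂ] Matrix (Fin n) (Fin n) ℂ}
    (hD : IsFDerivMatFun g x D) (hE : IsFDerivMatFun g x E)
    (h : Matrix (Fin n) (Fin n) ℂ) : D h = E h := by
  have herm : ∀ h : Matrix (Fin n) (Fin n) ℂ, h.IsHermitian → D h = E h := by
    intro h hh
    have hc : HasDerivAt (fun t : ℝ => x + t • h) h 0 := by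
      have := ((hasDerivAt_id (0 : ℝ)).smul_const h).const_add x
      rw [one_smul] at this
      exact this
    have hm : ∀ t : ℝ, (x + t • h).IsHermitian := fun t => by
      refine hx.add ?_
      unfold Matrix.IsHermitian
      rw [Matrix.conjTranspose_smul, hh.eq, star_trivial]
    have aux : ∀ F : Matrix (Fin n) (Fin n) ℂ →L[ℂ] Matrix (Fin n) (Fin n) ℂ,
        IsFDerivMatFun g x F → HasDerivAt (fun t : ℝ => matFun g (x + t • h)) (F h) 0 := by
      intro F hF
      have hF' : HasFDerivWithinAt (matFun g) (F.restrictScalars ℝ)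
          {y : Matrix (Fin n) (Fin n) ℂ | y.IsHermitian} (x + (0 : ℝ) • h) := by
        rw [zero_smul, add_zero]; exact hF
      have := hF'.comp_hasDerivWithinAt (s := Set.univ) (0 : ℝ) hc.hasDerivWithinAt
        (fun t _ => hm t)
      exact hasDerivWithinAt_univ.1 this
    exact (aux D hD).unique (aux E hE)
  have hre := realPart_add_I_smul_imaginaryPart h
  rw [← hre]
  simp only [map_add, map_smul]
  rw [herm _ (realPart h).2, herm _ (imaginaryPart h).2]

theorem matFun_conj {n : ℕ} (g : ℝ → ℝ) {u : Matrix (Fin n) (Fin n) ℂ}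
    (hu : u ∈ Matrix.unitaryGroup (Fin n) ℂ) {y : Matrix (Fin n) (Fin n) ℂ}
    (hy : y.IsHermitian) : matFun g (uᴴ * y * u) = uᴴ * matFun g y * u := by
  have hy2 : (uᴴ * y * u).IsHermitian := Matrix.isHermitian_conjTranspose_mul_mul u hy
  rw [matFun_eq_cfc g hy, matFun_eq_cfc g hy2]
  let v : unitary (Matrix (Fin n) (Fin n) ℂ) := star ⟨u, hu⟩
  have e : ∀ z, Unitary.conjStarAlgAut ℂ (Matrix (Fin n) (Fin n) ℂ) v z = uᴴ * z * u := by
    intro z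
    rw [Unitary.conjStarAlgAut_apply]
    simp [v, Matrix.star_eq_conjTranspose]
  have := StarAlgHomClass.map_cfc (S := ℂ) (Unitary.conjStarAlgAut ℂ (Matrix (Fin n) (Fin n) ℂ) v)
    g y (spectrum_finite_aux hy g) (by
      have : ⇑(Unitary.conjStarAlgAut ℂ (Matrix (Fin n) (Fin n) ℂ) v) = fun z => uᴴ * z * u :=
        funext e
      rw [this]; fun_prop) hy (by rw [e]; exact hy2)
  rw [e, e] at this
  exact this.symm

theorem deriv_conj {n : ℕ} {g : ℝ → ℝ} {x : Matrix (Fin n) (Fin n) ℂ} (hx : x.IsHermitian)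
    {u : Matrix (Fin n) (Fin n) ℂ} (hu : u ∈ Matrix.unitaryGroup (Fin n) ℂ)
    {D : Matrix (Fin n) (Fin n) ℂ →L[ℂ] Matrix (Fin n) (Fin n) ℂ} (hD : IsFDerivMatFun g x D) :
    IsFDerivMatFun g (uᴴ * x * u) ((twoMul uᴴ u).comp (D.comp (twoMul u uᴴ))) := by
  have h1 : u * uᴴ = 1 := Matrix.mem_unitaryGroup_iff.1 hu
  have h2 : uᴴ * u = 1 := Matrix.mem_unitaryGroup_iff'.1 hu
  have c1 : ∀ z, u * (uᴴ * z * u) * uᴴ = z := fun z => by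
    rw [show u * (uᴴ * z * u) * uᴴ = (u * uᴴ) * z * (u * uᴴ) by simp only [mul_assoc], h1]; simp
  have c2 : ∀ z, uᴴ * (u * z * uᴴ) * u = z := fun z => by
    rw [show uᴴ * (u * z * uᴴ) * u = (uᴴ * u) * z * (uᴴ * u) by simp only [mul_assoc], h2]; simp
  have hu' : ∀ z : Matrix (Fin n) (Fin n) ℂ, z.IsHermitian → (u * z * uᴴ).IsHermitian :=
    fun z hz => Matrix.isHermitian_mul_mul_conjTranspose u hz
  have hD' : HasFDerivWithinAt (matFun g) (D.restrictScalars ℝ)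
      {y : Matrix (Fin n) (Fin n) ℂ | y.IsHermitian}
      (((twoMul u uᴴ).restrictScalars ℝ) (uᴴ * x * u)) := by
    have : ((twoMul u uᴴ).restrictScalars ℝ) (uᴴ * x * u) = x := c1 x
    rw [this]; exact hD
  have hin : HasFDerivWithinAt (fun z => ((twoMul u uᴴ).restrictScalars ℝ) z)
      ((twoMul u uᴴ).restrictScalars ℝ) {y : Matrix (Fin n) (Fin n) ℂ | y.IsHermitian}
      (uᴴ * x * u) := ((twoMul u uᴴ).restrictScalars ℝ).hasFDerivWithinAt
  have hcomp := hD'.comp (uᴴ * x * u) hin (fun z hz => hu' z hz)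
  have hout := ((twoMul uᴴ u).restrictScalars ℝ).hasFDerivAt.comp_hasFDerivWithinAt
    (uᴴ * x * u) hcomp
  refine HasFDerivWithinAt.congr (f := _) hout (fun z hz => ?_) ?_
  · have := matFun_conj g hu (hu' z hz)
    rw [c2] at this
    exact this
  · have := matFun_conj g hu (hu' _ (Matrix.isHermitian_conjTranspose_mul_mul u hx))
    rw [c2] at this
    exact this

end Helpers

/-- If `f` is a matrix entropy and `Φ(x) = Σᵢ pᵢ uᵢ* x uᵢ` is a mixture of
unitary conjugations (a conditional expectation), then
`Tr (Φ(h)* ⬝ Df'(Φ(x)) Φ(h)) ≤ Tr (h* ⬝ Df'(x) h)` for positive definite `x` and arbitrary `h`. -/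
theorem matrixEntropy_conditional_expectation_contracts
    {n : ℕ} (f f' : ℝ → ℝ) (hf : IsMatrixEntropy f f')
    {k : ℕ} (u : Fin k → Matrix (Fin n) (Fin n) ℂ)
    (hu : ∀ i, u i ∈ Matrix.unitaryGroup (Fin n) ℂ)
    (p : Fin k → ℝ) (hp : ∀ i, 0 ≤ p i) (hp1 : ∑ i, p i = 1)
    (Φ : Matrix (Fin n) (Fin n) ℂ → Matrix (Fin n) (Fin n) ℂ)
    (hΦ : ∀ x, Φ x = ∑ i, (p i : ℂ) • ((u i)ᴴ * x * u i))
    (x : Matrix (Fin n) (Fin n) ℂ) (hx : x.PosDef)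
    (h : Matrix (Fin n) (Fin n) ℂ)
    (D DΦ : Matrix (Fin n) (Fin n) ℂ →L[ℂ] Matrix (Fin n) (Fin n) ℂ)
    (hD : IsFDerivMatFun f' x D) (hDΦ : IsFDerivMatFun f' (Φ x) DΦ) :
    (Matrix.trace ((Φ h)ᴴ * DΦ (Φ h))).re ≤ (Matrix.trace (hᴴ * D h)).re := by
  obtain ⟨hC2, hder, hconv⟩ := hf
  have hf' : ∀ t ∈ Set.Ioi (0 : ℝ), DifferentiableAt ℝ f' t := by
    have h1 : ContDiffOn ℝ 1 (deriv f) (Set.Ioi 0) :=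
      hC2.deriv_of_isOpen isOpen_Ioi (by norm_num)
    have h2 : ContDiffOn ℝ 1 f' (Set.Ioi 0) :=
      h1.congr fun t ht => (hder t ht).deriv.symm
    exact fun t ht => (h2.differentiableOn (by norm_num)).differentiableAt (Ioi_mem_nhds ht)
  choose! E hE using fun y (hy : y.PosDef) => exists_deriv (n := n) f' hf' y hy
  have hc := hconv n E hE
  have hpd : ∀ i, ((u i)ᴴ * x * u i).PosDef := fun i => by
    refine hx.conjTranspose_mul_mul_same ?_
    exact Matrix.mulVec_injective_of_isUnit (Unitary.isUnit_coe (U := ⟨u i, hu i⟩))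
  have hJ := hc.map_sum_le (t := Finset.univ) (w := p)
    (p := fun i => ((u i)ᴴ * x * u i, (u i)ᴴ * h * u i)) (fun i _ => hp i) hp1
    (fun i _ => hpd i)
  have hsum : ∑ i, p i • ((u i)ᴴ * x * u i, (u i)ᴴ * h * u i) = (Φ x, Φ h) := by
    rw [hΦ, hΦ]
    ext1
    · simp only [Prod.fst_sum, Prod.smul_mk, Complex.coe_smul]
    · simp only [Prod.snd_sum, Prod.smul_mk, Complex.coe_smul]
  have hmem := hc.1.sum_mem (t := Finset.univ) (w := p)
    (z := fun i => ((u i)ᴴ * x * u i, (u i)ᴴ * h * u i)) (fun i _ => hp i) hp1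
    (fun i _ => hpd i)
  rw [hsum] at hJ hmem
  have hΦx : (Φ x).PosDef := hmem
  have hterm : ∀ i, (Matrix.trace (((u i)ᴴ * h * u i)ᴴ *
      (E ((u i)ᴴ * x * u i)) ((u i)ᴴ * h * u i))).re = (Matrix.trace (hᴴ * D h)).re := by
    intro i
    have h1 : u i * (u i)ᴴ = 1 := Matrix.mem_unitaryGroup_iff.1 (hu i)
    rw [deriv_unique (hpd i).1 (hE _ (hpd i)) (deriv_conj hx.1 (hu i) hD)]
    have e : (twoMul (u i) (u i)ᴴ) ((u i)ᴴ * h * u i) = h := by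
      rw [twoMul_apply, show u i * ((u i)ᴴ * h * u i) * (u i)ᴴ =
        (u i * (u i)ᴴ) * h * (u i * (u i)ᴴ) by simp only [mul_assoc], h1]
      simp
    rw [ContinuousLinearMap.comp_apply, ContinuousLinearMap.comp_apply, e, twoMul_apply,
      Matrix.conjTranspose_mul, Matrix.conjTranspose_mul, Matrix.conjTranspose_conjTranspose,
      show (u i)ᴴ * (hᴴ * u i) * ((u i)ᴴ * D h * u i) =
        (u i)ᴴ * (hᴴ * (u i * (u i)ᴴ) * D h * u i) by simp only [mul_assoc],
      Matrix.trace_mul_comm, h1, mul_one, mul_assoc, h1, mul_one]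
  simp only [hterm] at hJ
  rw [← Finset.sum_smul, hp1, one_smul] at hJ
  rw [deriv_unique hΦx.1 hDΦ (hE _ hΦx)]
  exact hJ
end

section
/- Let H₁ and H₂ be finite-dimensional complex Hilbert spaces, H = H₁ ⊗ H₂, d₂ = dim H₂, and let p be a real number with 1 ≤ p ≤ 2. The function G(ρ) = d₂^{p−1} · Tr₁₂(ρ^p) − Tr₁(ρ₁^p) is convex on the set of positive definite operators ρ on H, where ρ₁ = Tr₂ ρ is the partial trace of ρ over H₂ and ρ^p is defined by the functional calculus. -/
open Matrix
open scoped ComplexOrder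

attribute [local instance] Matrix.normedAddCommGroup Matrix.normedSpace

section GoodTheory
variable {A B : Type*} [Fintype A] [DecidableEq A] [Fintype B] [DecidableEq B]

/-- Compression inequality `C* diag(f) C ≤ diag(f')`. -/
def Good (C : Matrix B A ℂ) (f : B → ℝ) (f' : A → ℝ) : Prop :=
  ∀ v : A → ℂ, ∑ b, f b * ‖(C *ᵥ v) b‖ ^ 2 ≤ ∑ a, f' a * ‖v a‖ ^ 2

lemma good_form (C : Matrix B A ℂ) (z : B → ℝ) (r : A → ℝ) (u v : A → ℂ) :
    (star u ⬝ᵥ ((diagonal (fun a => (r a : ℂ)) - Cᴴ * diagonal (fun b => (z b : ℂ)) * C) *ᵥ v)).re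
      = ∑ a, r a * (star (u a) * v a).re
        - ∑ b, z b * (star ((C *ᵥ u) b) * (C *ᵥ v) b).re := by
  have h2 : star u ⬝ᵥ ((Cᴴ * diagonal (fun b => (z b : ℂ)) * C) *ᵥ v)
      = star (C *ᵥ u) ⬝ᵥ (diagonal (fun b => (z b : ℂ)) *ᵥ (C *ᵥ v)) := by
    rw [star_mulVec, ← mulVec_mulVec, ← mulVec_mulVec, dotProduct_mulVec, dotProduct_mulVec,
      dotProduct_mulVec]
  rw [sub_mulVec, dotProduct_sub, Complex.sub_re, h2]
  congr 1
  · simp only [dotProduct, mulVec_diagonal, Pi.star_apply, Complex.re_sum]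
    refine Finset.sum_congr rfl fun a _ => ?_
    rw [mul_left_comm, Complex.re_ofReal_mul]
  · simp only [dotProduct, mulVec_diagonal, Pi.star_apply, Complex.re_sum]
    refine Finset.sum_congr rfl fun a _ => ?_
    rw [mul_left_comm, Complex.re_ofReal_mul]

lemma star_mul_self_re (z : ℂ) : (star z * z).re = ‖z‖ ^ 2 := by
  rw [Complex.star_def, ← Complex.normSq_eq_conj_mul_self, Complex.ofReal_re, Complex.normSq_eq_norm_sq]

lemma Good.gm {C : Matrix B A ℂ} {f g : B → ℝ} {f' g' : A → ℝ}
    (hf : Good C f f') (hg : Good C g g') (pf : ∀ b, 0 < f b) (pg : ∀ b, 0 < g b)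
    (pf' : ∀ a, 0 < f' a) (pg' : ∀ a, 0 < g' a) :
    Good C (fun b => √(f b) * √(g b)) (fun a => √(f' a) * √(g' a)) := by
  set z : B → ℝ := fun b => √(f b) * √(g b) with hz
  set r : A → ℝ := fun a => √(f' a) * √(g' a) with hr
  set M := diagonal (fun a => (r a : ℂ)) - Cᴴ * diagonal (fun b => (z b : ℂ)) * C with hM
  have hH : M.IsHermitian := by
    apply IsHermitian.sub
    · exact isHermitian_diagonal_of_self_adjoint _ (by ext; simp)
    · exact isHermitian_conjTranspose_mul_mul _
        (isHermitian_diagonal_of_self_adjoint _ (by ext; simp))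
  have hP : M.PosSemidef := by
    rw [hH.posSemidef_iff_eigenvalues_nonneg]
    intro i
    by_contra hneg
    have hneg : hH.eigenvalues i < 0 := not_le.mp hneg
    set μ := hH.eigenvalues i with hμ
    set w : A → ℂ := (hH.eigenvectorBasis i).ofLp with hw
    have hw0 : w ≠ 0 := by
      intro h0
      have := hH.eigenvectorBasis.orthonormal.ne_zero i
      apply this
      ext a
      exact congrFun h0 a
    have he : M *ᵥ w = (μ : ℝ) • w := hH.mulVec_eigenvectorBasis i
    set c : A → ℝ := fun a => √(g' a) / √(f' a) with hc
    have pc : ∀ a, 0 < c a := fun a => div_pos (Real.sqrt_pos.2 (pg' a)) (Real.sqrt_pos.2 (pf' a))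
    set u : A → ℂ := fun a => (c a : ℂ) * w a with hu
    have h1 := good_form C z r u w
    rw [← hM, he] at h1
    have huw : ∀ a, (star (u a) * w a).re = c a * ‖w a‖ ^ 2 := by
      intro a
      rw [hu]; simp only [star_mul', Complex.star_def, Complex.conj_ofReal]
      rw [mul_assoc, Complex.re_ofReal_mul, ← Complex.star_def, star_mul_self_re]
    have h2 : (star u ⬝ᵥ ((μ : ℝ) • w)).re = μ * ∑ a, c a * ‖w a‖ ^ 2 := by
      rw [dotProduct_smul, Complex.smul_re, smul_eq_mul]
      congr 1
      simp only [dotProduct, Pi.star_apply, Complex.re_sum, huw]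
    have h3 : ∑ a, r a * (star (u a) * w a).re = ∑ a, g' a * ‖w a‖ ^ 2 := by
      refine Finset.sum_congr rfl fun a _ => ?_
      rw [huw]
      have := Real.sqrt_pos.2 (pf' a)
      have e := Real.mul_self_sqrt (pg' a).le
      simp only [hr, hc]
      rw [← e, ← mul_assoc]
      congr 1
      field_simp
      simp [e, pow_two]
    have h4 : ∑ b, z b * (star ((C *ᵥ u) b) * (C *ᵥ w) b).re
        ≤ (1/2) * (∑ b, f b * ‖(C *ᵥ u) b‖ ^ 2 + ∑ b, g b * ‖(C *ᵥ w) b‖ ^ 2) := by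
      rw [← Finset.sum_add_distrib, Finset.mul_sum]
      refine Finset.sum_le_sum fun b _ => ?_
      have h5 : (star ((C *ᵥ u) b) * (C *ᵥ w) b).re ≤ ‖(C *ᵥ u) b‖ * ‖(C *ᵥ w) b‖ := by
        refine (Complex.re_le_norm _).trans ?_
        rw [norm_mul, norm_star]
      have h6 : 0 ≤ z b := by positivity
      have h7 := mul_le_mul_of_nonneg_left h5 h6
      have ef := Real.sq_sqrt (pf b).le
      have eg := Real.sq_sqrt (pg b).le
      simp only [hz] at h7 ⊢
      generalize ‖(C *ᵥ u) b‖ = X at *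
      generalize ‖(C *ᵥ w) b‖ = Y at *
      generalize hF : √(f b) = F at *
      generalize hG : √(g b) = G at *
      rw [← ef, ← eg]
      nlinarith [sq_nonneg (F * X - G * Y)]
    have h8 := hf u
    have h9 := hg w
    have h10 : ∑ a, f' a * ‖u a‖ ^ 2 = ∑ a, g' a * ‖w a‖ ^ 2 := by
      refine Finset.sum_congr rfl fun a _ => ?_
      simp only [hu, hc, norm_mul, Complex.norm_real, Real.norm_eq_abs, mul_pow, sq_abs, div_pow]
      rw [Real.sq_sqrt (pf' a).le, Real.sq_sqrt (pg' a).le]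
      have := pf' a
      field_simp
    have h11 : 0 < ∑ a, c a * ‖w a‖ ^ 2 := by
      obtain ⟨a, ha⟩ := Function.ne_iff.1 hw0
      refine Finset.sum_pos' (fun a _ => by have := pc a; positivity) ⟨a, Finset.mem_univ _, ?_⟩
      have := pc a
      have : 0 < ‖w a‖ := norm_pos_iff.2 ha
      positivity
    rw [h2, h3] at h1
    have h12 : μ * ∑ a, c a * ‖w a‖ ^ 2 < 0 := mul_neg_of_neg_of_pos hneg h11
    linarith
  intro v
  have h1 := good_form C z r v v
  have h2 := hP.re_dotProduct_nonneg v
  rw [← hM] at h1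
  simp only [star_mul_self_re] at h1
  have h3 : RCLike.re (star v ⬝ᵥ M *ᵥ v) = (star v ⬝ᵥ M *ᵥ v).re := rfl
  linarith

lemma Good.add {C : Matrix B A ℂ} {f g : B → ℝ} {f' g' : A → ℝ}
    (hf : Good C f f') (hg : Good C g g') :
    Good C (fun b => f b + g b) (fun a => f' a + g' a) := by
  intro v
  simp only [add_mul, Finset.sum_add_distrib]
  exact add_le_add (hf v) (hg v)

lemma Good.smul {C : Matrix B A ℂ} {f : B → ℝ} {f' : A → ℝ} {c : ℝ} (hc : 0 ≤ c)
    (hf : Good C f f') :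
    Good C (fun b => c * f b) (fun a => c * f' a) := by
  intro v
  simp only [mul_assoc, ← Finset.mul_sum]
  exact mul_le_mul_of_nonneg_left (hf v) hc

/-- weighted geometric means -/
lemma Good.wgm {C : Matrix B A ℂ} {f g : B → ℝ} {f' g' : A → ℝ}
    (hf : Good C f f') (hg : Good C g g') (pf : ∀ b, 0 < f b) (pg : ∀ b, 0 < g b)
    (pf' : ∀ a, 0 < f' a) (pg' : ∀ a, 0 < g' a) {θ : ℝ} (h0 : 0 ≤ θ) (h1 : θ ≤ 1) :
    Good C (fun b => f b ^ (1 - θ) * g b ^ θ) (fun a => f' a ^ (1 - θ) * g' a ^ θ) := by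
  set T : Set ℝ := {θ | Good C (fun b => f b ^ (1 - θ) * g b ^ θ)
    (fun a => f' a ^ (1 - θ) * g' a ^ θ)} with hT
  have hcl : IsClosed T := by
    have : T = ⋂ v : A → ℂ, {θ : ℝ | ∑ b, (f b ^ (1 - θ) * g b ^ θ) * ‖(C *ᵥ v) b‖ ^ 2
        ≤ ∑ a, (f' a ^ (1 - θ) * g' a ^ θ) * ‖v a‖ ^ 2} := by
      ext θ; simp [hT, Good]
    rw [this]
    refine isClosed_iInter fun v => isClosed_le ?_ ?_
    · refine continuous_finsetSum _ fun b _ => ?_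
      refine ((Continuous.mul ?_ ?_)).mul continuous_const
      · exact continuous_const.rpow (by fun_prop) fun _ => Or.inl (pf b).ne'
      · exact continuous_const.rpow (by fun_prop) fun _ => Or.inl (pg b).ne'
    · refine continuous_finsetSum _ fun b _ => ?_
      refine ((Continuous.mul ?_ ?_)).mul continuous_const
      · exact continuous_const.rpow (by fun_prop) fun _ => Or.inl (pf' b).ne'
      · exact continuous_const.rpow (by fun_prop) fun _ => Or.inl (pg' b).ne'
  have m0 : (0 : ℝ) ∈ T := by simpa [hT] using hf
  have m1 : (1 : ℝ) ∈ T := by simpa [hT] using hg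
  have key : ∀ x y s t : ℝ, 0 < x → 0 < y →
      √(x ^ (1 - s) * y ^ s) * √(x ^ (1 - t) * y ^ t)
        = x ^ (1 - (s + t) / 2) * y ^ ((s + t) / 2) := by
    intro x y s t hx hy
    rw [← Real.sqrt_mul (by positivity), Real.sqrt_eq_iff_mul_self_eq (by positivity) (by positivity)]
    rw [show (x ^ (1 - s) * y ^ s * (x ^ (1 - t) * y ^ t))
      = (x ^ (1 - s) * x ^ (1 - t)) * (y ^ s * y ^ t) by ring,
      show (x ^ (1 - (s + t) / 2) * y ^ ((s + t) / 2)) * (x ^ (1 - (s + t) / 2) * y ^ ((s + t) / 2))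
      = (x ^ (1 - (s + t) / 2) * x ^ (1 - (s + t) / 2)) * (y ^ ((s + t) / 2) * y ^ ((s + t) / 2))
       by ring]
    rw [← Real.rpow_add hx, ← Real.rpow_add hy, ← Real.rpow_add hx, ← Real.rpow_add hy]
    congr 2 <;> ring
  have mid : ∀ s ∈ T, ∀ t ∈ T, (s + t) / 2 ∈ T := by
    intro s hs t ht
    have pp : ∀ {x y u : ℝ}, 0 < x → 0 < y → 0 < x ^ (1 - u) * y ^ u := fun hx hy => by positivity
    have := Good.gm hs ht (fun b => pp (pf b) (pg b)) (fun b => pp (pf b) (pg b))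
      (fun b => pp (pf' b) (pg' b)) (fun b => pp (pf' b) (pg' b))
    have e1 : (fun b => √(f b ^ (1 - s) * g b ^ s) * √(f b ^ (1 - t) * g b ^ t))
      = fun b => f b ^ (1 - (s + t) / 2) * g b ^ ((s + t) / 2) :=
      funext fun b => key _ _ _ _ (pf b) (pg b)
    have e2 : (fun b => √(f' b ^ (1 - s) * g' b ^ s) * √(f' b ^ (1 - t) * g' b ^ t))
      = fun b => f' b ^ (1 - (s + t) / 2) * g' b ^ ((s + t) / 2) :=
      funext fun b => key _ _ _ _ (pf' b) (pg' b)
    rw [e1, e2] at this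
    exact this
  change θ ∈ T
  by_contra hθ
  have hne1 : (T ∩ Set.Iic θ).Nonempty := ⟨0, m0, h0⟩
  have hne2 : (T ∩ Set.Ici θ).Nonempty := ⟨1, m1, h1⟩
  have bd1 : BddAbove (T ∩ Set.Iic θ) := ⟨θ, fun x hx => hx.2⟩
  have bd2 : BddBelow (T ∩ Set.Ici θ) := ⟨θ, fun x hx => hx.2⟩
  have a1 := (hcl.inter isClosed_Iic).csSup_mem hne1 bd1
  have a2 := (hcl.inter isClosed_Ici).csInf_mem hne2 bd2
  set s := sSup (T ∩ Set.Iic θ)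
  set t := sInf (T ∩ Set.Ici θ)
  have hs : s < θ := lt_of_le_of_ne a1.2 (fun h => hθ (h ▸ a1.1))
  have ht : θ < t := lt_of_le_of_ne a2.2 (fun h => hθ (h ▸ a2.1))
  have hm := mid s a1.1 t a2.1
  rcases le_total ((s + t) / 2) θ with h | h
  · have := le_csSup bd1 ⟨hm, h⟩
    change _ ≤ s at this
    linarith
  · have := csInf_le bd2 ⟨hm, h⟩
    change t ≤ _ at this
    linarith

end GoodTheory
section PhiTheory
variable {A B : Type*} [Fintype A] [DecidableEq A] [Fintype B] [DecidableEq B]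

lemma Good.rpow {C : Matrix B A ℂ} {f : B → ℝ} {f' : A → ℝ}
    (h1 : Good C (fun _ => 1) (fun _ => 1))
    (hf : Good C f f') (pf : ∀ b, 0 < f b)
    (pf' : ∀ a, 0 < f' a) {θ : ℝ} (h0 : 0 ≤ θ) (hθ : θ ≤ 1) :
    Good C (fun b => f b ^ θ) (fun a => f' a ^ θ) := by
  simpa using Good.wgm h1 hf (fun _ => one_pos) pf (fun _ => one_pos) pf' h0 hθ

lemma Good.lieb {C : Matrix B A ℂ} {s t : B → ℝ} {s' t' : A → ℝ}
    (h1 : Good C (fun _ => 1) (fun _ => 1))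
    (hs : Good C s s') (ht : Good C t t') (ps : ∀ b, 0 < s b) (pt : ∀ b, 0 < t b)
    (ps' : ∀ a, 0 < s' a) (pt' : ∀ a, 0 < t' a) {a b : ℝ} (ha : 0 ≤ a) (hb : 0 ≤ b)
    (hab : a + b ≤ 1) :
    Good C (fun i => s i ^ a * t i ^ b) (fun i => s' i ^ a * t' i ^ b) := by
  rcases eq_or_lt_of_le hb with hb0 | hb0
  · subst hb0
    simpa using Good.rpow h1 hs ps ps' ha (by linarith)
  · have ha1 : 0 < 1 - a := by linarith
    have ht2 := Good.rpow h1 ht pt pt' (θ := b / (1 - a)) (by positivity)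
      (by rw [div_le_one ha1]; linarith)
    have := Good.wgm ht2 hs (fun i => Real.rpow_pos_of_pos (pt i) _) ps
      (fun i => Real.rpow_pos_of_pos (pt' i) _) ps' ha (by linarith)
    have key : ∀ x y : ℝ, 0 < y → (y ^ (b / (1 - a))) ^ (1 - a) * x ^ a = x ^ a * y ^ b := by
      intro x y hy
      rw [← Real.rpow_mul hy.le, div_mul_cancel₀ _ ha1.ne', mul_comm]
    have e1 : (fun i => (t i ^ (b / (1 - a))) ^ (1 - a) * s i ^ a) = fun i => s i ^ a * t i ^ b :=
      funext fun i => key _ _ (pt i)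
    have e2 : (fun i => (t' i ^ (b / (1 - a))) ^ (1 - a) * s' i ^ a)
        = fun i => s' i ^ a * t' i ^ b :=
      funext fun i => key _ _ (pt' i)
    rw [e1, e2] at this
    exact this

/-- the interpolated power -/
noncomputable def wfun (q θ x y : ℝ) : ℝ := θ * x ^ q + (1 - θ) * y ^ q

lemma wfun_pos {q θ x y : ℝ} (h0 : 0 ≤ θ) (h1 : θ ≤ 1) (hx : 0 < x) (hy : 0 < y) :
    0 < wfun q θ x y := by
  have hx := Real.rpow_pos_of_pos hx q
  have hy := Real.rpow_pos_of_pos hy q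
  unfold wfun
  rcases eq_or_lt_of_le h0 with h | h
  · subst h; simpa using hy
  · have : 0 ≤ (1 - θ) * y ^ q := mul_nonneg (by linarith) hy.le
    have := mul_pos h hx
    linarith

lemma Good.w {C : Matrix B A ℂ} {s t : B → ℝ} {s' t' : A → ℝ}
    (h1 : Good C (fun _ => 1) (fun _ => 1))
    (hs : Good C s s') (ht : Good C t t') (ps : ∀ b, 0 < s b) (pt : ∀ b, 0 < t b)
    (ps' : ∀ a, 0 < s' a) (pt' : ∀ a, 0 < t' a) {q θ : ℝ} (hq : 0 ≤ q) (h0 : 0 ≤ θ) (hθ : θ ≤ 1)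
    (j : ℕ) : ∀ (a b : ℝ), 0 ≤ a → 0 ≤ b → a + b + q * j ≤ 1 →
    Good C (fun i => s i ^ a * t i ^ b * wfun q θ (s i) (t i) ^ j)
      (fun i => s' i ^ a * t' i ^ b * wfun q θ (s' i) (t' i) ^ j) := by
  induction j with
  | zero =>
    intro a b ha hb hab
    simpa using Good.lieb h1 hs ht ps pt ps' pt' ha hb (by simpa using hab)
  | succ j ih =>
    intro a b ha hb hab
    push_cast at hab
    have g1 := (ih (a + q) b (by linarith) hb (by linarith)).smul h0
    have g2 := (ih a (b + q) ha (by linarith) (by linarith)).smul (c := 1 - θ) (by linarith)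
    have g := g1.add g2
    have key : ∀ x y : ℝ, 0 < x → 0 < y →
        θ * (x ^ (a + q) * y ^ b * wfun q θ x y ^ j)
          + (1 - θ) * (x ^ a * y ^ (b + q) * wfun q θ x y ^ j)
        = x ^ a * y ^ b * wfun q θ x y ^ (j + 1) := by
      intro x y hx hy
      rw [pow_succ, Real.rpow_add hx, Real.rpow_add hy]
      conv_rhs => rw [mul_comm (wfun q θ x y ^ j)]
      conv_rhs => enter [2, 1]; unfold wfun
      ring
    have e1 := funext fun i => key (s i) (t i) (ps i) (pt i)
    have e2 := funext fun i => key (s' i) (t' i) (ps' i) (pt' i)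
    rw [e1, e2] at g
    exact g

lemma Good.wpow {C : Matrix B A ℂ} {s t : B → ℝ} {s' t' : A → ℝ}
    (h1 : Good C (fun _ => 1) (fun _ => 1))
    (hs : Good C s s') (ht : Good C t t') (ps : ∀ b, 0 < s b) (pt : ∀ b, 0 < t b)
    (ps' : ∀ a, 0 < s' a) (pt' : ∀ a, 0 < t' a) {q θ : ℝ} (hq : 0 < q) (hq1 : q ≤ 1)
    (h0 : 0 ≤ θ) (hθ : θ ≤ 1) :
    Good C (fun i => wfun q θ (s i) (t i) ^ (1 / q - 1))
      (fun i => wfun q θ (s' i) (t' i) ^ (1 / q - 1)) := by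
  set N := ⌊1 / q⌋₊ with hN
  have hq' : 1 ≤ 1 / q := by rw [le_div_iff₀ hq]; linarith
  have hN1 : (N : ℝ) ≤ 1 / q := Nat.floor_le (by positivity)
  have hN2 : 1 / q < N + 1 := Nat.lt_floor_add_one _
  have hN3 : 1 ≤ N := Nat.floor_pos.2 hq'
  have hN4 : (0 : ℝ) < N := by exact_mod_cast hN3
  have hqN : q * N ≤ 1 := by rw [le_div_iff₀ hq] at hN1; linarith
  have g := Good.w h1 hs ht ps pt ps' pt' hq.le h0 hθ N 0 0 le_rfl le_rfl (by linarith)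
  simp only [Real.rpow_zero, one_mul] at g
  have g2 := Good.rpow h1 g (fun i => pow_pos (wfun_pos h0 hθ (ps i) (pt i)) _)
    (fun i => pow_pos (wfun_pos h0 hθ (ps' i) (pt' i)) _) (θ := (1 / q - 1) / N)
    (div_nonneg (by linarith) hN4.le) (by rw [div_le_one hN4]; linarith)
  have key : ∀ x : ℝ, 0 < x → (x ^ N) ^ ((1 / q - 1) / N) = x ^ (1 / q - 1) := by
    intro x hx
    rw [← Real.rpow_natCast, ← Real.rpow_mul hx.le, mul_div_cancel₀ _ hN4.ne']
  have e1 := funext fun i => key _ (wfun_pos (q := q) h0 hθ (ps i) (pt i))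
  have e2 := funext fun i => key _ (wfun_pos (q := q) h0 hθ (ps' i) (pt' i))
  rw [e1, e2] at g2
  exact g2

/-- inverse divided difference of `x ↦ x ^ q` (up to the factor `q`) -/
noncomputable def Phi (q x y : ℝ) : ℝ := ∫ θ in (0 : ℝ)..1, wfun q θ x y ^ (1 / q - 1)

lemma wpow_intervalIntegrable {q x y : ℝ} (hx : 0 < x) (hy : 0 < y) :
    IntervalIntegrable (fun θ => wfun q θ x y ^ (1 / q - 1)) MeasureTheory.volume 0 1 := by
  apply ContinuousOn.intervalIntegrable
  rw [Set.uIcc_of_le zero_le_one]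
  refine ContinuousOn.rpow_const ?_ fun θ hθ => Or.inl (wfun_pos hθ.1 hθ.2 hx hy).ne'
  unfold wfun
  fun_prop

lemma Phi_nonneg {q x y : ℝ} (hx : 0 < x) (hy : 0 < y) : 0 ≤ Phi q x y := by
  unfold Phi
  refine intervalIntegral.integral_nonneg zero_le_one fun θ hθ => ?_
  exact Real.rpow_nonneg (wfun_pos hθ.1 hθ.2 hx hy).le _

lemma Phi_mul {q x y : ℝ} (hq : 0 < q) (hx : 0 < x) (hy : 0 < y) :
    Phi q x y * (x ^ q - y ^ q) = q * (x - y) := by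
  have hd : ∀ θ ∈ Set.uIcc (0 : ℝ) 1, HasDerivAt (fun θ => q * wfun q θ x y ^ (1 / q))
      (wfun q θ x y ^ (1 / q - 1) * (x ^ q - y ^ q)) θ := by
    intro θ hθ
    rw [Set.uIcc_of_le zero_le_one] at hθ
    have hw : HasDerivAt (fun θ => wfun q θ x y) (x ^ q - y ^ q) θ := by
      have := ((hasDerivAt_id θ).mul_const (x ^ q)).add
        (((hasDerivAt_id θ).const_sub 1).mul_const (y ^ q))
      refine this.congr_deriv ?_
      ring
    have := (hw.rpow_const (p := 1 / q) (Or.inl (wfun_pos hθ.1 hθ.2 hx hy).ne')).const_mul q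
    refine this.congr_deriv ?_
    field_simp
  have := intervalIntegral.integral_eq_sub_of_hasDerivAt hd
    ((wpow_intervalIntegrable hx hy).mul_const _)
  rw [intervalIntegral.integral_mul_const] at this
  unfold Phi
  rw [this]
  have h : ∀ z : ℝ, 0 < z → (z ^ q) ^ (1 / q) = z := by
    intro z hz
    rw [← Real.rpow_mul hz.le, mul_one_div_cancel hq.ne', Real.rpow_one]
  have e1 : wfun q 1 x y = x ^ q := by simp [wfun]
  have e2 : wfun q 0 x y = y ^ q := by simp [wfun]
  rw [e1, e2, h x hx, h y hy]
  ring

lemma Good.phi {C : Matrix B A ℂ} {s t : B → ℝ} {s' t' : A → ℝ}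
    (h1 : Good C (fun _ => 1) (fun _ => 1))
    (hs : Good C s s') (ht : Good C t t') (ps : ∀ b, 0 < s b) (pt : ∀ b, 0 < t b)
    (ps' : ∀ a, 0 < s' a) (pt' : ∀ a, 0 < t' a) {q : ℝ} (hq : 0 < q) (hq1 : q ≤ 1) :
    Good C (fun i => Phi q (s i) (t i)) (fun i => Phi q (s' i) (t' i)) := by
  intro v
  simp only [Phi, ← intervalIntegral.integral_mul_const]
  have i1 := fun b => (wpow_intervalIntegrable (q := q) (ps b) (pt b)).mul_const
    (‖(C *ᵥ v) b‖ ^ 2)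
  have i2 := fun a => (wpow_intervalIntegrable (q := q) (ps' a) (pt' a)).mul_const
    (‖v a‖ ^ 2)
  rw [← intervalIntegral.integral_finsetSum fun b _ => i1 b,
    ← intervalIntegral.integral_finsetSum fun a _ => i2 a]
  refine intervalIntegral.integral_mono_on zero_le_one ?_ ?_ fun θ hθ => ?_
  · simpa [Finset.sum_fn] using IntervalIntegrable.sum Finset.univ fun b _ => i1 b
  · simpa [Finset.sum_fn] using IntervalIntegrable.sum Finset.univ fun b _ => i2 b
  · exact Good.wpow h1 hs ht ps pt ps' pt' hq hq1 hθ.1 hθ.2 v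

end PhiTheory
section MatTheory
open scoped Kronecker
variable {n : Type*} [Fintype n] [DecidableEq n]

lemma matFun_eq {x : Matrix n n ℂ} (hx : x.IsHermitian) (f : ℝ → ℝ) : matFun f x =
    (hx.eigenvectorUnitary : Matrix n n ℂ) *
      Matrix.diagonal (fun i => (f (hx.eigenvalues i) : ℂ)) *
      star (hx.eigenvectorUnitary : Matrix n n ℂ) := by
  unfold matFun
  rw [dif_pos hx]

lemma eU_mul {x : Matrix n n ℂ} (hx : x.IsHermitian) :
    (hx.eigenvectorUnitary : Matrix n n ℂ) * star (hx.eigenvectorUnitary : Matrix n n ℂ) = 1 :=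
  Unitary.coe_mul_star_self _

lemma eU_mul' {x : Matrix n n ℂ} (hx : x.IsHermitian) :
    star (hx.eigenvectorUnitary : Matrix n n ℂ) * (hx.eigenvectorUnitary : Matrix n n ℂ) = 1 :=
  Unitary.coe_star_mul_self _

lemma matFun_one {x : Matrix n n ℂ} (hx : x.IsHermitian) : matFun (fun _ => 1) x = 1 := by
  rw [matFun_eq hx]
  simp [eU_mul hx]

lemma matFun_id {x : Matrix n n ℂ} (hx : x.IsHermitian) : matFun (fun t => t) x = x := by
  rw [matFun_eq hx]
  exact (hx.spectral_theorem).symm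

lemma matFun_herm {x : Matrix n n ℂ} (hx : x.IsHermitian) (f : ℝ → ℝ) :
    (matFun f x)ᴴ = matFun f x := by
  rw [matFun_eq hx]
  simp only [star_eq_conjTranspose, conjTranspose_mul, conjTranspose_conjTranspose,
    diagonal_conjTranspose]
  rw [← Matrix.mul_assoc]
  congr 3
  ext i
  simp

/-- coordinates with respect to the joint eigenbasis -/
noncomputable def coord {y x : Matrix n n ℂ} (hy : y.IsHermitian) (hx : x.IsHermitian)
    (X : Matrix n n ℂ) : Matrix n n ℂ :=
  star (hy.eigenvectorUnitary : Matrix n n ℂ) * X * (hx.eigenvectorUnitary : Matrix n n ℂ)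

lemma sum_coord {y x : Matrix n n ℂ} (hy : y.IsHermitian) (hx : x.IsHermitian)
    (X : Matrix n n ℂ) (g h : ℝ → ℝ) :
    ∑ i, ∑ j, g (hy.eigenvalues i) * h (hx.eigenvalues j) * ‖coord hy hx X i j‖ ^ 2
      = (trace (Xᴴ * matFun g y * X * matFun h x)).re := by
  have e : trace (Xᴴ * matFun g y * X * matFun h x) =
      trace ((coord hy hx X)ᴴ * diagonal (fun i => (g (hy.eigenvalues i) : ℂ)) * coord hy hx X
        * diagonal (fun i => (h (hx.eigenvalues i) : ℂ))) := by
    rw [matFun_eq hy, matFun_eq hx, coord]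
    simp only [star_eq_conjTranspose, conjTranspose_mul, conjTranspose_conjTranspose]
    rw [← Matrix.mul_assoc, trace_mul_comm]
    simp only [Matrix.mul_assoc]
  rw [e]
  simp only [trace, diag, mul_diagonal]
  rw [Complex.re_sum, Finset.sum_comm]
  refine Finset.sum_congr rfl fun j _ => ?_
  rw [mul_apply, Finset.sum_mul, Complex.re_sum]
  refine Finset.sum_congr rfl fun i _ => ?_
  rw [mul_diagonal, conjTranspose_apply]
  rw [← star_mul_self_re, ← Complex.re_ofReal_mul]
  congr 1
  push_cast
  ring

lemma sum_coord_inner {y x : Matrix n n ℂ} (hy : y.IsHermitian) (hx : x.IsHermitian)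
    (X Z : Matrix n n ℂ) :
    ∑ i, ∑ j, (star (coord hy hx X i j) * coord hy hx Z i j).re
      = (trace (Xᴴ * Z)).re := by
  have e : trace (Xᴴ * Z) = trace ((coord hy hx X)ᴴ * coord hy hx Z) := by
    unfold coord
    simp only [star_eq_conjTranspose, conjTranspose_mul, conjTranspose_conjTranspose]
    have h1 := eU_mul hx
    have h2 := eU_mul hy
    rw [star_eq_conjTranspose] at h1 h2
    generalize (hx.eigenvectorUnitary : Matrix n n ℂ) = V at *
    generalize (hy.eigenvectorUnitary : Matrix n n ℂ) = U at *
    calc trace (Xᴴ * Z) = trace (Xᴴ * (U * Uᴴ) * Z * (V * Vᴴ)) := by rw [h1, h2]; simp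
      _ = _ := by
        rw [← Matrix.mul_assoc _ V, trace_mul_comm]
        simp only [Matrix.mul_assoc]
  rw [e]
  simp only [trace, diag, mul_apply, conjTranspose_apply, Complex.re_sum]
  rw [Finset.sum_comm]

lemma coord_sub {y x : Matrix n n ℂ} (hy : y.IsHermitian) (hx : x.IsHermitian)
    (g : ℝ → ℝ) (i j : n) :
    coord hy hx (matFun g y - matFun g x) i j
      = ((g (hy.eigenvalues i) - g (hx.eigenvalues j) : ℝ) : ℂ) * coord hy hx 1 i j := by
  have e : coord hy hx (matFun g y - matFun g x)
      = diagonal (fun i => (g (hy.eigenvalues i) : ℂ)) * coord hy hx 1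
        - coord hy hx 1 * diagonal (fun i => (g (hx.eigenvalues i) : ℂ)) := by
    unfold coord
    rw [matFun_eq hy, matFun_eq hx, Matrix.mul_sub, Matrix.sub_mul]
    have h1 := eU_mul' hx
    have h2 := eU_mul' hy
    congr 1
    · simp only [← Matrix.mul_assoc, h2, Matrix.one_mul, Matrix.mul_one]
    · simp only [Matrix.mul_assoc, h1, Matrix.one_mul, Matrix.mul_one]
  rw [e, Matrix.sub_apply, diagonal_mul, mul_diagonal]
  push_cast
  ring

lemma trace_diff {y x : Matrix n n ℂ} (hy : y.IsHermitian) (hx : x.IsHermitian) (g : ℝ → ℝ) :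
    (trace ((matFun g y - matFun g x) * (y - x))).re
      = ∑ i, ∑ j, (g (hy.eigenvalues i) - g (hx.eigenvalues j)) *
          (hy.eigenvalues i - hx.eigenvalues j) * ‖coord hy hx 1 i j‖ ^ 2 := by
  have e : (matFun g y - matFun g x)ᴴ = matFun g y - matFun g x := by
    rw [conjTranspose_sub, matFun_herm hy, matFun_herm hx]
  rw [← e, ← sum_coord_inner hy hx]
  refine Finset.sum_congr rfl fun i _ => Finset.sum_congr rfl fun j _ => ?_
  rw [coord_sub]
  have : coord hy hx (y - x) i j
      = ((hy.eigenvalues i - hx.eigenvalues j : ℝ) : ℂ) * coord hy hx 1 i j := by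
    rw [← coord_sub hy hx (fun t => t), matFun_id hy, matFun_id hx]
  rw [this, ← star_mul_self_re, ← Complex.re_ofReal_mul]
  congr 1
  simp only [star_mul', Complex.star_def, Complex.conj_ofReal]
  push_cast
  ring

/-- Klein's inequality for the power function -/
lemma klein {y x : Matrix n n ℂ} (hy : y.PosDef) (hx : x.PosDef) {p : ℝ} (hp : 1 ≤ p) :
    p * (trace (matFun (fun t => t ^ (p - 1)) x * (y - x))).re
      ≤ (trace (matFun (fun t => t ^ p) y)).re - (trace (matFun (fun t => t ^ p) x)).re := by
  have H := fun g h => sum_coord hy.1 hx.1 1 g h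
  simp only [conjTranspose_one, Matrix.one_mul, Matrix.mul_one] at H
  have h1 := H (fun t => t ^ p) (fun _ => 1)
  have h2 := H (fun _ => 1) (fun t => t ^ p)
  have h3 := H (fun t => t) (fun t => t ^ (p - 1))
  have h4 := H (fun _ => 1) (fun t => t * t ^ (p - 1))
  have e4 : matFun (fun t => t * t ^ (p - 1)) x = matFun (fun t => t ^ (p - 1)) x * x := by
    nth_rewrite 3 [← matFun_id hx.1]
    rw [matFun_eq hx.1, matFun_eq hx.1, matFun_eq hx.1]
    have h2 := eU_mul' hx.1
    generalize (hx.1.eigenvectorUnitary : Matrix n n ℂ) = U at *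
    have : ∀ D D' : Matrix n n ℂ, U * D * star U * (U * D' * star U) = U * (D * D') * star U := by
      intro D D'
      calc _ = U * D * (star U * U) * D' * star U := by simp only [Matrix.mul_assoc]
        _ = _ := by rw [h2]; simp only [Matrix.mul_assoc, Matrix.one_mul]
    rw [this, diagonal_mul_diagonal]
    congr 3
    ext i
    push_cast
    ring
  rw [matFun_one hy.1, Matrix.one_mul] at h2 h4
  rw [matFun_one hx.1, Matrix.mul_one] at h1
  rw [matFun_id hy.1, trace_mul_comm] at h3
  rw [Matrix.mul_sub, trace_sub, Complex.sub_re, ← e4, ← h1, ← h2, ← h3, ← h4]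
  simp only [mul_sub, Finset.mul_sum, ← Finset.sum_sub_distrib]
  refine Finset.sum_le_sum fun i _ => Finset.sum_le_sum fun j _ => ?_
  have hl := hy.eigenvalues_pos i
  have hm := hx.eigenvalues_pos j
  set l := hy.1.eigenvalues i
  set m := hx.1.eigenvalues j
  have hb := one_add_mul_self_le_rpow_one_add (s := l / m - 1) (by
    have := div_pos hl hm; linarith) hp
  rw [add_sub_cancel, Real.div_rpow hl.le hm.le, le_div_iff₀ (Real.rpow_pos_of_pos hm _)] at hb
  have hmp : m ^ p = m ^ (p - 1) * m := by
    rw [← Real.rpow_add_one hm.ne', sub_add_cancel]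
  have hb2 : p * (l * m ^ (p - 1) - m * m ^ (p - 1)) ≤ l ^ p - m ^ p := by
    have : (1 + p * (l / m - 1)) * m ^ p = m ^ p + p * (l * m ^ (p - 1) - m * m ^ (p - 1)) := by
      rw [hmp]; field_simp
    linarith
  have := mul_le_mul_of_nonneg_right hb2 (sq_nonneg ‖coord hy.1 hx.1 1 i j‖)
  linarith
end MatTheory
section KeyIneq
open scoped Kronecker
variable {ι₁ ι₂ : Type*} [Fintype ι₁] [DecidableEq ι₁] [Fintype ι₂] [DecidableEq ι₂]

lemma ptrace_posDef_s3 [Nonempty ι₂] {ρ : Matrix (ι₁ × ι₂) (ι₁ × ι₂) ℂ} (h : ρ.PosDef) :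
    (ptrace ρ).PosDef := by
  have e : ptrace ρ = ∑ k : ι₂, ρ.submatrix (fun i => (i, k)) (fun i => (i, k)) := by
    ext i j
    simp [ptrace, Matrix.sum_apply]
  rw [e]
  refine posDef_sum Finset.univ_nonempty fun k _ => h.submatrix ?_
  intro a b hab
  exact (Prod.ext_iff.1 hab).1

lemma trace_ptrace (ρ : Matrix (ι₁ × ι₂) (ι₁ × ι₂) ℂ) (m : Matrix ι₁ ι₁ ℂ) :
    trace (ρ * (m ⊗ₖ (1 : Matrix ι₂ ι₂ ℂ))) = trace (ptrace ρ * m) := by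
  simp only [trace, diag, mul_apply, ptrace, of_apply, kroneckerMap_apply, Fintype.sum_prod_type,
    one_apply, Finset.sum_mul]
  simp only [mul_ite, mul_one, mul_zero, Finset.sum_ite_eq', Finset.mem_univ, if_true]
  refine Finset.sum_congr rfl fun i _ => ?_
  rw [Finset.sum_comm]

/-- matrix with given coordinates -/
noncomputable def uncoord {y x : Matrix ι₁ ι₁ ℂ} (hy : y.IsHermitian) (hx : x.IsHermitian)
    (v : ι₁ × ι₁ → ℂ) : Matrix ι₁ ι₁ ℂ :=
  (hy.eigenvectorUnitary : Matrix ι₁ ι₁ ℂ) * Matrix.of (fun i j => v (i, j)) *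
    star (hx.eigenvectorUnitary : Matrix ι₁ ι₁ ℂ)

lemma coord_uncoord {y x : Matrix ι₁ ι₁ ℂ} (hy : y.IsHermitian) (hx : x.IsHermitian)
    (v : ι₁ × ι₁ → ℂ) (i j : ι₁) : coord hy hx (uncoord hy hx v) i j = v (i, j) := by
  have h1 := eU_mul' hx
  have h2 := eU_mul' hy
  unfold coord uncoord
  generalize (hx.eigenvectorUnitary : Matrix ι₁ ι₁ ℂ) = V at *
  generalize (hy.eigenvectorUnitary : Matrix ι₁ ι₁ ℂ) = U at *
  have : star U * (U * Matrix.of (fun i j => v (i, j)) * star V) * V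
      = (star U * U) * Matrix.of (fun i j => v (i, j)) * (star V * V) := by
    simp only [Matrix.mul_assoc]
  rw [this, h1, h2]
  simp

lemma uncoord_coord {y x : Matrix ι₁ ι₁ ℂ} (hy : y.IsHermitian) (hx : x.IsHermitian)
    (k : Matrix ι₁ ι₁ ℂ) : uncoord hy hx (fun a => coord hy hx k a.1 a.2) = k := by
  have h1 := eU_mul hx
  have h2 := eU_mul hy
  unfold coord uncoord
  generalize (hx.eigenvectorUnitary : Matrix ι₁ ι₁ ℂ) = V at *
  generalize (hy.eigenvectorUnitary : Matrix ι₁ ι₁ ℂ) = U at *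
  have : U * (star U * k * V) * star V = (U * star U) * k * (V * star V) := by
    simp only [Matrix.mul_assoc]
  have e : Matrix.of (fun i j => (star U * k * V) i j) = star U * k * V := rfl
  rw [e, this, h1, h2]
  simp

/-- The map `k ↦ k ⊗ 1` in coordinates. -/
noncomputable def embMap {y x : Matrix (ι₁ × ι₂) (ι₁ × ι₂) ℂ} {y₁ x₁ : Matrix ι₁ ι₁ ℂ}
    (hy : y.IsHermitian) (hx : x.IsHermitian) (hy₁ : y₁.IsHermitian) (hx₁ : x₁.IsHermitian) :
    (ι₁ × ι₁ → ℂ) →ₗ[ℂ] ((ι₁ × ι₂) × (ι₁ × ι₂) → ℂ) where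
  toFun v := fun b => coord hy hx (uncoord hy₁ hx₁ v ⊗ₖ (1 : Matrix ι₂ ι₂ ℂ)) b.1 b.2
  map_add' v w := by
    have : uncoord hy₁ hx₁ (v + w) = uncoord hy₁ hx₁ v + uncoord hy₁ hx₁ w := by
      unfold uncoord
      rw [← Matrix.add_mul, ← Matrix.mul_add]
      rfl
    ext b
    rw [this, add_kronecker]
    simp only [coord, Matrix.mul_add, Matrix.add_mul, Matrix.add_apply, Pi.add_apply]
  map_smul' c v := by
    have : uncoord hy₁ hx₁ (c • v) = c • uncoord hy₁ hx₁ v := by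
      unfold uncoord
      rw [← Matrix.smul_mul, ← Matrix.mul_smul]
      rfl
    ext b
    rw [this, smul_kronecker]
    simp only [coord, Matrix.mul_smul, Matrix.smul_mul, Matrix.smul_apply, Pi.smul_apply,
      RingHom.id_apply]

lemma emb_good [Nonempty ι₂] {y x : Matrix (ι₁ × ι₂) (ι₁ × ι₂) ℂ}
    (hy : y.PosDef) (hx : x.PosDef) {q : ℝ} (hq : 0 < q) (hq1 : q ≤ 1)
    (hy₁ : (ptrace y).PosDef) (hx₁ : (ptrace x).PosDef) (k : Matrix ι₁ ι₁ ℂ) :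
    ∑ i, ∑ j, Phi q (hy.1.eigenvalues i) (hx.1.eigenvalues j) *
        ‖coord hy.1 hx.1 (k ⊗ₖ (1 : Matrix ι₂ ι₂ ℂ)) i j‖ ^ 2
      ≤ (Fintype.card ι₂ : ℝ) * ∑ i, ∑ j, Phi q (hy₁.1.eigenvalues i / (Fintype.card ι₂ : ℝ))
          (hx₁.1.eigenvalues j / (Fintype.card ι₂ : ℝ)) * ‖coord hy₁.1 hx₁.1 k i j‖ ^ 2 := by
  set d : ℝ := (Fintype.card ι₂ : ℝ) with hd
  have hd0 : 0 < d := by rw [hd]; exact_mod_cast Fintype.card_pos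
  set E := embMap hy.1 hx.1 hy₁.1 hx₁.1
  set C : Matrix ((ι₁ × ι₂) × (ι₁ × ι₂)) (ι₁ × ι₁) ℂ :=
    LinearMap.toMatrix' ((((√d)⁻¹ : ℝ) : ℂ) • E) with hC
  have hCv : ∀ v b, ‖(C *ᵥ v) b‖ ^ 2
      = d⁻¹ * ‖coord hy.1 hx.1 (uncoord hy₁.1 hx₁.1 v ⊗ₖ (1 : Matrix ι₂ ι₂ ℂ)) b.1 b.2‖ ^ 2 := by
    intro v b
    rw [hC, LinearMap.toMatrix'_mulVec, LinearMap.smul_apply, Pi.smul_apply, smul_eq_mul, norm_mul,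
      mul_pow, Complex.norm_real, Real.norm_eq_abs, sq_abs, inv_pow, Real.sq_sqrt hd0.le]
    rfl
  have conj : ∀ k : Matrix ι₁ ι₁ ℂ, (k ⊗ₖ (1 : Matrix ι₂ ι₂ ℂ))ᴴ
      = kᴴ ⊗ₖ (1 : Matrix ι₂ ι₂ ℂ) := by
    intro k; rw [conjTranspose_kronecker, conjTranspose_one]
  have mulk : ∀ k l : Matrix ι₁ ι₁ ℂ, (k ⊗ₖ (1 : Matrix ι₂ ι₂ ℂ)) * (l ⊗ₖ (1 : Matrix ι₂ ι₂ ℂ))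
      = (k * l) ⊗ₖ (1 : Matrix ι₂ ι₂ ℂ) := by
    intro k l; rw [← mul_kronecker_mul, Matrix.mul_one]
  have h1 : Good C (fun _ => 1) (fun _ => 1) := by
    intro v
    simp only [hCv, Fintype.sum_prod_type (α₁ := ι₁ × ι₂), Fintype.sum_prod_type (α₁ := ι₁) (α₂ := ι₁)]
    have a := sum_coord hy.1 hx.1 (uncoord hy₁.1 hx₁.1 v ⊗ₖ (1 : Matrix ι₂ ι₂ ℂ))
      (fun _ => 1) (fun _ => 1)
    have b := sum_coord hy₁.1 hx₁.1 (uncoord hy₁.1 hx₁.1 v) (fun _ => 1) (fun _ => 1)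
    rw [matFun_one hy.1, matFun_one hx.1, conj, Matrix.mul_one, Matrix.mul_one, mulk,
      trace_kronecker, trace_one] at a
    rw [matFun_one hy₁.1, matFun_one hx₁.1, Matrix.mul_one, Matrix.mul_one] at b
    simp only [coord_uncoord, one_mul] at a b ⊢
    simp only [← Finset.mul_sum]
    rw [a, b, mul_comm (trace _)]
    have : ((Fintype.card ι₂ : ℂ)) = ((d : ℝ) : ℂ) := by rw [hd]; simp
    rw [this, Complex.re_ofReal_mul, ← mul_assoc, inv_mul_cancel₀ hd0.ne', one_mul]
  have hs : Good C (fun b => hy.1.eigenvalues b.1) (fun a => hy₁.1.eigenvalues a.1 / d) := by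
    intro v
    simp only [hCv, Fintype.sum_prod_type (α₁ := ι₁ × ι₂), Fintype.sum_prod_type (α₁ := ι₁) (α₂ := ι₁)]
    have a := sum_coord hy.1 hx.1 (uncoord hy₁.1 hx₁.1 v ⊗ₖ (1 : Matrix ι₂ ι₂ ℂ))
      (fun t => t) (fun _ => 1)
    have b := sum_coord hy₁.1 hx₁.1 (uncoord hy₁.1 hx₁.1 v) (fun t => t) (fun _ => 1)
    rw [matFun_id hy.1, matFun_one hx.1, conj, Matrix.mul_one, Matrix.mul_assoc, trace_mul_comm,
      Matrix.mul_assoc, mulk, trace_ptrace] at a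
    rw [matFun_id hy₁.1, matFun_one hx₁.1, Matrix.mul_one, Matrix.mul_assoc, trace_mul_comm,
      Matrix.mul_assoc, ← a] at b
    simp only [coord_uncoord, mul_one] at b
    simp only [div_eq_inv_mul, mul_assoc, mul_left_comm _ d⁻¹]
    simp only [← Finset.mul_sum] at b ⊢
    rw [b]
  have ht : Good C (fun b => hx.1.eigenvalues b.2) (fun a => hx₁.1.eigenvalues a.2 / d) := by
    intro v
    simp only [hCv, Fintype.sum_prod_type (α₁ := ι₁ × ι₂), Fintype.sum_prod_type (α₁ := ι₁) (α₂ := ι₁)]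
    have a := sum_coord hy.1 hx.1 (uncoord hy₁.1 hx₁.1 v ⊗ₖ (1 : Matrix ι₂ ι₂ ℂ))
      (fun _ => 1) (fun t => t)
    have b := sum_coord hy₁.1 hx₁.1 (uncoord hy₁.1 hx₁.1 v) (fun _ => 1) (fun t => t)
    rw [matFun_id hx.1, matFun_one hy.1, conj, Matrix.mul_one, mulk, trace_mul_comm,
      trace_ptrace] at a
    rw [matFun_id hx₁.1, matFun_one hy₁.1, Matrix.mul_one, trace_mul_comm, ← a] at b
    simp only [coord_uncoord, one_mul] at b
    simp only [div_eq_inv_mul, mul_assoc, mul_left_comm _ d⁻¹]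
    simp only [← Finset.mul_sum]
    rw [b]
  have g := Good.phi h1 hs ht (fun b => hy.eigenvalues_pos _) (fun b => hx.eigenvalues_pos _)
    (fun b => div_pos (hy₁.eigenvalues_pos _) hd0) (fun b => div_pos (hx₁.eigenvalues_pos _) hd0)
    hq hq1 (fun a => coord hy₁.1 hx₁.1 k a.1 a.2)
  simp only [hCv, uncoord_coord, mul_left_comm _ d⁻¹, ← Finset.mul_sum] at g
  simp only [Fintype.sum_prod_type (α₁ := ι₁ × ι₂) (α₂ := ι₁ × ι₂),
    Fintype.sum_prod_type (α₁ := ι₁) (α₂ := ι₁)] at g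
  rw [inv_mul_le_iff₀ hd0] at g
  exact g

lemma ptrace_sub (y x : Matrix (ι₁ × ι₂) (ι₁ × ι₂) ℂ) :
    ptrace (y - x) = ptrace y - ptrace x := by
  ext i j
  simp [ptrace]

lemma key_ineq [Nonempty ι₂] {y x : Matrix (ι₁ × ι₂) (ι₁ × ι₂) ℂ}
    (hy : y.PosDef) (hx : x.PosDef) {q : ℝ} (hq : 0 < q) (hq1 : q ≤ 1) :
    (trace ((matFun (fun t => t ^ q) (ptrace y) - matFun (fun t => t ^ q) (ptrace x)) *
        (ptrace y - ptrace x))).re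
      ≤ (Fintype.card ι₂ : ℝ) ^ q *
        (trace ((matFun (fun t => t ^ q) y - matFun (fun t => t ^ q) x) * (y - x))).re := by
  have hy₁ := ptrace_posDef_s3 hy
  have hx₁ := ptrace_posDef_s3 hx
  set d : ℝ := (Fintype.card ι₂ : ℝ) with hd
  have hd0 : 0 < d := by rw [hd]; exact_mod_cast Fintype.card_pos
  set k := matFun (fun t => t ^ q) (ptrace y) - matFun (fun t => t ^ q) (ptrace x) with hk
  set K := matFun (fun t => t ^ q) y - matFun (fun t => t ^ q) x with hK
  have hkH : kᴴ = k := by rw [hk, conjTranspose_sub, matFun_herm hy₁.1, matFun_herm hx₁.1]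
  have hg := emb_good hy hx hq hq1 hy₁ hx₁ k
  rw [← hd] at hg
  set X := k ⊗ₖ (1 : Matrix ι₂ ι₂ ℂ) with hX
  set R := (trace (k * (ptrace y - ptrace x))).re with hR
  set L := (trace (K * (y - x))).re with hL
  have hdq : 0 < d ^ q := Real.rpow_pos_of_pos hd0 q
  -- the right-hand side of `hg`
  have r1 : d * ∑ i, ∑ j, Phi q (hy₁.1.eigenvalues i / d)
          (hx₁.1.eigenvalues j / d) * ‖coord hy₁.1 hx₁.1 k i j‖ ^ 2 = q * d ^ q * R := by
    rw [hR, hk, trace_diff hy₁.1 hx₁.1]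
    simp only [Finset.mul_sum]
    refine Finset.sum_congr rfl fun i _ => Finset.sum_congr rfl fun j _ => ?_
    rw [coord_sub, norm_mul, mul_pow, Complex.norm_real, Real.norm_eq_abs, sq_abs]
    have hl := hy₁.eigenvalues_pos i
    have hm := hx₁.eigenvalues_pos j
    set l := hy₁.1.eigenvalues i
    set m := hx₁.1.eigenvalues j
    have hP := Phi_mul hq (div_pos hl hd0) (div_pos hm hd0)
    rw [Real.div_rpow hl.le hd0.le, Real.div_rpow hm.le hd0.le] at hP
    have hP2 : d * (Phi q (l / d) (m / d) * (l ^ q - m ^ q)) = q * d ^ q * (l - m) := by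
      field_simp at hP
      linarith
    linear_combination (l ^ q - m ^ q) * ‖coord hy₁.1 hx₁.1 1 i j‖ ^ 2 * hP2
  rw [r1] at hg
  -- the middle term
  have cs : ∀ i j, coord hy.1 hx.1 (y - x) i j
      = ((hy.1.eigenvalues i - hx.1.eigenvalues j : ℝ) : ℂ) * coord hy.1 hx.1 1 i j := by
    intro i j
    rw [← coord_sub hy.1 hx.1 (fun t => t), matFun_id hy.1, matFun_id hx.1]
  have r2 : ∑ i, ∑ j, Phi q (hy.1.eigenvalues i) (hx.1.eigenvalues j) *
      (star (coord hy.1 hx.1 X i j) * coord hy.1 hx.1 K i j).re = q * R := by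
    have e : R = (trace (Xᴴ * (y - x))).re := by
      rw [hX, conjTranspose_kronecker, conjTranspose_one, hkH, trace_mul_comm, trace_ptrace,
        ptrace_sub, trace_mul_comm, hR]
    rw [e, ← sum_coord_inner hy.1 hx.1]
    simp only [Finset.mul_sum]
    refine Finset.sum_congr rfl fun i _ => Finset.sum_congr rfl fun j _ => ?_
    have hP := Phi_mul hq (hy.eigenvalues_pos i) (hx.eigenvalues_pos j)
    rw [cs, hK, coord_sub, mul_left_comm, Complex.re_ofReal_mul, mul_left_comm (star _),
      Complex.re_ofReal_mul, ← mul_assoc, hP, mul_assoc]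
  have r3 : ∑ i, ∑ j, Phi q (hy.1.eigenvalues i) (hx.1.eigenvalues j) *
      ‖coord hy.1 hx.1 K i j‖ ^ 2 = q * L := by
    rw [hL, hK, trace_diff hy.1 hx.1]
    simp only [Finset.mul_sum]
    refine Finset.sum_congr rfl fun i _ => Finset.sum_congr rfl fun j _ => ?_
    rw [coord_sub, norm_mul, mul_pow, Complex.norm_real, Real.norm_eq_abs, sq_abs]
    have hP := Phi_mul hq (hy.eigenvalues_pos i) (hx.eigenvalues_pos j)
    linear_combination (hy.1.eigenvalues i ^ q - hx.1.eigenvalues j ^ q)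
      * ‖coord hy.1 hx.1 1 i j‖ ^ 2 * hP
  set c : ℝ := (d ^ q)⁻¹ with hc
  have fin : 0 ≤ ∑ i, ∑ j, Phi q (hy.1.eigenvalues i) (hx.1.eigenvalues j) *
      (‖coord hy.1 hx.1 K i j‖ ^ 2
        - 2 * c * (star (coord hy.1 hx.1 X i j) * coord hy.1 hx.1 K i j).re
        + c ^ 2 * ‖coord hy.1 hx.1 X i j‖ ^ 2) := by
    refine Finset.sum_nonneg fun i _ => Finset.sum_nonneg fun j _ => mul_nonneg
      (Phi_nonneg (hy.eigenvalues_pos i) (hx.eigenvalues_pos j)) ?_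
    have h5 : (star (coord hy.1 hx.1 X i j) * coord hy.1 hx.1 K i j).re
        ≤ ‖coord hy.1 hx.1 X i j‖ * ‖coord hy.1 hx.1 K i j‖ := by
      refine (Complex.re_le_norm _).trans ?_
      rw [norm_mul, norm_star]
    have hc0 : 0 ≤ c := by positivity
    nlinarith [mul_le_mul_of_nonneg_left h5 hc0,
      sq_nonneg (‖coord hy.1 hx.1 K i j‖ - c * ‖coord hy.1 hx.1 X i j‖)]
  have split : ∑ i, ∑ j, Phi q (hy.1.eigenvalues i) (hx.1.eigenvalues j) *
      (‖coord hy.1 hx.1 K i j‖ ^ 2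
        - 2 * c * (star (coord hy.1 hx.1 X i j) * coord hy.1 hx.1 K i j).re
        + c ^ 2 * ‖coord hy.1 hx.1 X i j‖ ^ 2)
      = q * L - 2 * c * (q * R) + c ^ 2 * ∑ i, ∑ j,
        Phi q (hy.1.eigenvalues i) (hx.1.eigenvalues j) * ‖coord hy.1 hx.1 X i j‖ ^ 2 := by
    rw [← r3, ← r2]
    simp only [Finset.mul_sum, ← Finset.sum_sub_distrib, ← Finset.sum_add_distrib]
    refine Finset.sum_congr rfl fun i _ => Finset.sum_congr rfl fun j _ => ?_
    ring
  rw [split] at fin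
  have h6 := mul_le_mul_of_nonneg_left hg (sq_nonneg c)
  have h7 : c ^ 2 * (q * d ^ q * R) = c * (q * R) := by
    rw [hc]; field_simp
  have h8 : 0 ≤ q * (L - c * R) := by linarith
  have h9 : 0 ≤ L - c * R := nonneg_of_mul_nonneg_right h8 hq
  have h10 : d ^ q * (c * R) = R := by rw [hc]; field_simp
  have := mul_le_mul_of_nonneg_left (sub_nonneg.1 h9) hdq.le
  linarith
end KeyIneq
section Final
variable {ι₁ ι₂ : Type*} [Fintype ι₁] [DecidableEq ι₁] [Fintype ι₂] [DecidableEq ι₂]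

lemma posDef_segment {n : Type*} [Fintype n] [DecidableEq n] {x y : Matrix n n ℂ}
    (hx : x.PosDef) (hy : y.PosDef) {a b : ℝ} (ha : 0 ≤ a) (hb : 0 ≤ b) (hab : a + b = 1) :
    (a • x + b • y).PosDef := by
  rcases eq_or_lt_of_le ha with h | h
  · subst h
    have : b = 1 := by linarith
    subst this
    simpa using hy
  · rcases eq_or_lt_of_le hb with h' | h'
    · subst h'
      have : a = 1 := by linarith
      subst this
      simpa using hx
    · exact (hx.smul h).add (hy.smul h')

lemma key_ineq' [Nonempty ι₂] {y x : Matrix (ι₁ × ι₂) (ι₁ × ι₂) ℂ}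
    (hy : y.PosDef) (hx : x.PosDef) {q : ℝ} (hq : 0 ≤ q) (hq1 : q ≤ 1) :
    (trace ((matFun (fun t => t ^ q) (ptrace y) - matFun (fun t => t ^ q) (ptrace x)) *
        (ptrace y - ptrace x))).re
      ≤ (Fintype.card ι₂ : ℝ) ^ q *
        (trace ((matFun (fun t => t ^ q) y - matFun (fun t => t ^ q) x) * (y - x))).re := by
  rcases eq_or_lt_of_le hq with h | h
  · subst h
    simp only [Real.rpow_zero]
    rw [matFun_one hy.1, matFun_one hx.1, matFun_one (ptrace_posDef_s3 hy).1,
      matFun_one (ptrace_posDef_s3 hx).1]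
    simp
  · exact key_ineq hy hx h hq1

lemma subgrad_real {g u g₂ u₂ : ℝ → ℝ}
    (h1 : ∀ s ∈ Set.Icc (0 : ℝ) 1, ∀ t ∈ Set.Icc (0 : ℝ) 1, u s * (t - s) ≤ g t - g s)
    (h2 : ∀ s ∈ Set.Icc (0 : ℝ) 1, ∀ t ∈ Set.Icc (0 : ℝ) 1, u₂ s * (t - s) ≤ g₂ t - g₂ s)
    (h3 : ∀ s ∈ Set.Icc (0 : ℝ) 1, ∀ t ∈ Set.Icc (0 : ℝ) 1, s < t → u₂ t - u₂ s ≤ u t - u s) :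
    u 0 - u₂ 0 ≤ (g 1 - g₂ 1) - (g 0 - g₂ 0) := by
  have main : ∀ n : ℕ, (u 0 - u₂ 0) - (u₂ 1 - u₂ 0) * (1 / ((n : ℝ) + 1))
      ≤ (g 1 - g₂ 1) - (g 0 - g₂ 0) := by
    intro n
    set δ : ℝ := 1 / ((n : ℝ) + 1) with hδ
    have hδ0 : 0 < δ := by positivity
    have hn : ((n : ℝ) + 1) * δ = 1 := by rw [hδ]; field_simp
    have ind : ∀ k : ℕ, k ≤ n + 1 →
        k * δ * (u 0 - u₂ 0) - (u₂ (k * δ) - u₂ 0) * δ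
          ≤ (g (k * δ) - g₂ (k * δ)) - (g 0 - g₂ 0) := by
      intro k
      induction k with
      | zero => intro _; simp
      | succ k ih =>
        intro hk
        have ih := ih (by omega)
        have hk' : (k : ℝ) + 1 ≤ n + 1 := by exact_mod_cast hk
        have m1 : (k : ℝ) * δ ∈ Set.Icc (0 : ℝ) 1 := ⟨by positivity, by nlinarith⟩
        have m2 : ((k : ℝ) + 1) * δ ∈ Set.Icc (0 : ℝ) 1 := ⟨by positivity, by nlinarith⟩
        have m0 : (0 : ℝ) ∈ Set.Icc (0 : ℝ) 1 := ⟨le_rfl, zero_le_one⟩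
        have a1 := h1 _ m1 _ m2
        have a2 := h2 _ m2 _ m1
        have a3 : u₂ (k * δ) - u₂ 0 ≤ u (k * δ) - u 0 := by
          rcases eq_or_lt_of_le m1.1 with h | h
          · rw [← h]; simp
          · exact h3 _ m0 _ m1 h
        have e1 : ((k : ℝ) + 1) * δ - k * δ = δ := by ring
        have e2 : (k : ℝ) * δ - (k + 1) * δ = -δ := by ring
        rw [e1] at a1
        rw [e2] at a2
        push_cast
        have a4 := mul_le_mul_of_nonneg_right a3 hδ0.le
        nlinarith
    have := ind (n + 1) le_rfl
    push_cast at this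
    rw [hn] at this
    linarith
  have lim : Filter.Tendsto (fun n : ℕ => (u 0 - u₂ 0) - (u₂ 1 - u₂ 0) * (1 / ((n : ℝ) + 1)))
      Filter.atTop (nhds ((u 0 - u₂ 0) - (u₂ 1 - u₂ 0) * 0)) :=
    tendsto_const_nhds.sub (tendsto_const_nhds.mul tendsto_one_div_add_atTop_nhds_zero_nat)
  rw [mul_zero, sub_zero] at lim
  exact le_of_tendsto' lim main

/-- the gradient functional -/
noncomputable def subLin (p : ℝ) (c h : Matrix (ι₁ × ι₂) (ι₁ × ι₂) ℂ) : ℝ :=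
  (Fintype.card ι₂ : ℝ) ^ (p - 1) * (p * (trace (matFun (fun t => t ^ (p - 1)) c * h)).re)
    - p * (trace (matFun (fun t => t ^ (p - 1)) (ptrace c) * ptrace h)).re

lemma ptrace_add (y x : Matrix (ι₁ × ι₂) (ι₁ × ι₂) ℂ) :
    ptrace (y + x) = ptrace y + ptrace x := by
  ext i j
  simp [ptrace, Finset.sum_add_distrib]

lemma ptrace_smul (r : ℝ) (x : Matrix (ι₁ × ι₂) (ι₁ × ι₂) ℂ) :
    ptrace (r • x) = r • ptrace x := by
  ext i j
  simp [ptrace, Finset.mul_sum]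

lemma subLin_add (p : ℝ) (c h k : Matrix (ι₁ × ι₂) (ι₁ × ι₂) ℂ) :
    subLin p c (h + k) = subLin p c h + subLin p c k := by
  unfold subLin
  rw [ptrace_add, Matrix.mul_add, Matrix.mul_add, trace_add, trace_add, Complex.add_re,
    Complex.add_re]
  ring

lemma subLin_smul (p : ℝ) (c h : Matrix (ι₁ × ι₂) (ι₁ × ι₂) ℂ) (r : ℝ) :
    subLin p c (r • h) = r * subLin p c h := by
  unfold subLin
  rw [ptrace_smul, Matrix.mul_smul, Matrix.mul_smul, trace_smul, trace_smul, Complex.smul_re,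
    Complex.smul_re, smul_eq_mul, smul_eq_mul]
  ring

lemma subLin_zero (p : ℝ) (c : Matrix (ι₁ × ι₂) (ι₁ × ι₂) ℂ) : subLin p c 0 = 0 := by
  simpa using subLin_smul p c 0 0

lemma subgrad_mat [Nonempty ι₂] {x y : Matrix (ι₁ × ι₂) (ι₁ × ι₂) ℂ}
    (hx : x.PosDef) (hy : y.PosDef) {p : ℝ} (hp1 : 1 ≤ p) (hp2 : p ≤ 2) :
    subLin p x (y - x) ≤
      ((Fintype.card ι₂ : ℝ) ^ (p - 1) * (Matrix.trace (matFun (fun t : ℝ => t ^ p) y)).re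
        - (Matrix.trace (matFun (fun t : ℝ => t ^ p) (ptrace y))).re)
      - ((Fintype.card ι₂ : ℝ) ^ (p - 1) * (Matrix.trace (matFun (fun t : ℝ => t ^ p) x)).re
        - (Matrix.trace (matFun (fun t : ℝ => t ^ p) (ptrace x))).re) := by
  set D : ℝ := (Fintype.card ι₂ : ℝ) ^ (p - 1) with hD
  have hD0 : 0 ≤ D := by positivity
  set z : ℝ → Matrix (ι₁ × ι₂) (ι₁ × ι₂) ℂ := fun t => (1 - t) • x + t • y with hz
  have z0 : z 0 = x := by simp [hz]
  have z1 : z 1 = y := by simp [hz]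
  have hzP : ∀ t ∈ Set.Icc (0 : ℝ) 1, (z t).PosDef := fun t ht =>
    posDef_segment hx hy (by linarith [ht.2]) ht.1 (by ring)
  have hzd : ∀ s t, z t - z s = (t - s) • (y - x) := by
    intro s t
    simp only [hz]
    module
  have hzd' : ∀ s t, ptrace (z t) - ptrace (z s) = (t - s) • ptrace (y - x) := by
    intro s t
    rw [← ptrace_sub, hzd, ptrace_smul]
  have := subgrad_real
    (g := fun t => D * (trace (matFun (fun t : ℝ => t ^ p) (z t))).re)
    (u := fun t => D * (p * (trace (matFun (fun t : ℝ => t ^ (p - 1)) (z t) * (y - x))).re))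
    (g₂ := fun t => (trace (matFun (fun t : ℝ => t ^ p) (ptrace (z t)))).re)
    (u₂ := fun t => p * (trace (matFun (fun t : ℝ => t ^ (p - 1)) (ptrace (z t))
      * ptrace (y - x))).re)
    (by
      intro s hs t ht
      have k := klein (hzP t ht) (hzP s hs) hp1
      rw [hzd, Matrix.mul_smul, trace_smul, Complex.smul_re, smul_eq_mul] at k
      have := mul_le_mul_of_nonneg_left k hD0
      linarith)
    (by
      intro s hs t ht
      have k := klein (ptrace_posDef_s3 (hzP t ht)) (ptrace_posDef_s3 (hzP s hs)) hp1
      rw [hzd', Matrix.mul_smul, trace_smul, Complex.smul_re, smul_eq_mul] at k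
      linarith)
    (by
      intro s hs t ht hst
      have k := key_ineq' (hzP t ht) (hzP s hs) (q := p - 1) (by linarith) (by linarith)
      rw [hzd', hzd, Matrix.mul_smul, trace_smul, Complex.smul_re, smul_eq_mul,
        Matrix.mul_smul, trace_smul, Complex.smul_re, smul_eq_mul, ← hD, mul_left_comm] at k
      have k2 := le_of_mul_le_mul_left k (sub_pos.2 hst)
      rw [Matrix.sub_mul, Matrix.sub_mul, trace_sub, trace_sub, Complex.sub_re,
        Complex.sub_re] at k2
      have := mul_le_mul_of_nonneg_left k2 (show 0 ≤ p by linarith)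
      linarith)
  simp only [z0, z1] at this
  unfold subLin
  linarith
end Final

/-- For `1 ≤ p ≤ 2` the map
`G(ρ) = d₂^(p−1) · Tr₁₂ ρ^p − Tr₁ ρ₁^p` is convex on positive definite operators on
`H = H₁ ⊗ H₂`, where `ρ₁ = Tr₂ ρ` and `d₂ = dim H₂`. -/
theorem rpow_sub_partialTrace_convex
    {ι₁ ι₂ : Type*} [Fintype ι₁] [DecidableEq ι₁] [Fintype ι₂] [DecidableEq ι₂]
    (d₂ : ℕ) (hd₂ : d₂ = Fintype.card ι₂)
    (p : ℝ) (hp1 : 1 ≤ p) (hp2 : p ≤ 2) :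
    ConvexOn ℝ {ρ : Matrix (ι₁ × ι₂) (ι₁ × ι₂) ℂ | ρ.PosDef}
      (fun ρ => (d₂ : ℝ) ^ (p - 1) * (Matrix.trace (matFun (fun t : ℝ => t ^ p) ρ)).re
        - (Matrix.trace (matFun (fun t : ℝ => t ^ p) (ptrace ρ))).re) := by
  subst hd₂
  have hcvx : Convex ℝ {ρ : Matrix (ι₁ × ι₂) (ι₁ × ι₂) ℂ | ρ.PosDef} := by
    intro x hx y hy a b ha hb hab
    exact posDef_segment hx hy ha hb hab
  refine ⟨hcvx, ?_⟩
  intro x hx y hy a b ha hb hab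
  rcases isEmpty_or_nonempty ι₂ with hE | hN
  · have e1 : x = a • x + b • y := Subsingleton.elim _ _
    have e2 : y = a • x + b • y := Subsingleton.elim _ _
    rw [← e1]
    rw [← e1] at e2
    rw [e2, ← add_smul, hab, one_smul]
  · set c := a • x + b • y with hc
    have hcP : c.PosDef := posDef_segment hx hy ha hb hab
    have g1 := subgrad_mat hcP hx hp1 hp2
    have g2 := subgrad_mat hcP hy hp1 hp2
    set F := fun ρ : Matrix (ι₁ × ι₂) (ι₁ × ι₂) ℂ =>
      (Fintype.card ι₂ : ℝ) ^ (p - 1) * (Matrix.trace (matFun (fun t : ℝ => t ^ p) ρ)).re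
        - (Matrix.trace (matFun (fun t : ℝ => t ^ p) (ptrace ρ))).re with hF
    change _ ≤ F x - F c at g1
    change _ ≤ F y - F c at g2
    have hz : a • (x - c) + b • (y - c) = 0 := by
      have : a • (x - c) + b • (y - c) = (a • x + b • y) - (a + b) • c := by
        rw [smul_sub, smul_sub, add_smul]; abel
      rw [this, hab, one_smul, ← hc, sub_self]
    have hl := congrArg (subLin p c) hz
    rw [subLin_add, subLin_smul, subLin_smul, subLin_zero] at hl
    have m1 := mul_le_mul_of_nonneg_left g1 ha
    have m2 := mul_le_mul_of_nonneg_left g2 hb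
    have : F c = a * F c + b * F c := by rw [← add_mul, hab, one_mul]
    simp only [smul_eq_mul]
    linarith
end

section
/- For every n, the function of two variables (x,h) ↦ Tr( h* · D log(x) h ) is jointly convex, where x ranges over n×n positive definite complex matrices, h ranges over all n×n complex matrices, and D log(x) denotes the Fréchet differential at x of the matrix logarithm x ↦ log x defined by the functional calculus. That is, for positive definite x, y, arbitrary h, k, and t ∈ [0,1], Tr( (th+(1−t)k)* · D log(tx+(1−t)y)(th+(1−t)k) ) ≤ t·Tr( h* · D log(x) h ) + (1−t)·Tr( k* · D log(y) k ). -/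
open Matrix
open scoped ComplexOrder

attribute [local instance] Matrix.normedAddCommGroup Matrix.normedSpace

section helpers

variable {m : Type*} [Fintype m] [DecidableEq m]

lemma gen_deriv_conj_exp {A : Type*} [NormedRing A] [NormedAlgebra ℝ A] [CompleteSpace A]
    (c x : A) :
    HasDerivAt (fun τ : ℝ => NormedSpace.exp (τ • c) * x * NormedSpace.exp (τ • (-c)))
      (c * x - x * c) 0 := by
  have h1 := hasDerivAt_exp_smul_const (𝕂 := ℝ) c (0 : ℝ)
  have h2 := hasDerivAt_exp_smul_const (𝕂 := ℝ) (-c) (0 : ℝ)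
  have h3 := (h1.mul_const x).mul h2
  refine h3.congr_deriv ?_
  simp [sub_eq_add_neg]

lemma gen_deriv_mul_exp {A : Type*} [NormedRing A] [NormedAlgebra ℝ A] [CompleteSpace A]
    (x b : A) :
    HasDerivAt (fun τ : ℝ => x * NormedSpace.exp (τ • b)) (x * b) 0 := by
  have h1 := hasDerivAt_exp_smul_const (𝕂 := ℝ) b (0 : ℝ)
  refine (h1.const_mul x).congr_deriv ?_
  simp

lemma linfty_complete : @CompleteSpace (Matrix m m ℂ)
    (@PseudoMetricSpace.toUniformSpace _ (@SeminormedRing.toPseudoMetricSpace _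
      (@NormedRing.toSeminormedRing _ Matrix.linftyOpNormedRing))) :=
  inferInstanceAs (CompleteSpace (m → m → ℂ))

lemma deriv_conj_exp (c x : Matrix m m ℂ) :
    HasDerivAt (fun τ : ℝ => NormedSpace.exp (τ • c) * x * NormedSpace.exp (τ • (-c)))
      (c * x - x * c) 0 :=
  @gen_deriv_conj_exp (Matrix m m ℂ) Matrix.linftyOpNormedRing Matrix.linftyOpNormedAlgebra
    linfty_complete c x

lemma deriv_mul_exp (x b : Matrix m m ℂ) :
    HasDerivAt (fun τ : ℝ => x * NormedSpace.exp (τ • b)) (x * b) 0 :=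
  @gen_deriv_mul_exp (Matrix m m ℂ) Matrix.linftyOpNormedRing Matrix.linftyOpNormedAlgebra
    linfty_complete x b

lemma matFun_log_exp (b : Matrix m m ℂ) (hb : b.IsHermitian) :
    matFun Real.log (NormedSpace.exp b) = b := by
  have he : (NormedSpace.exp b).IsHermitian := hb.exp
  have h1 : matFun Real.log (NormedSpace.exp b) = cfc Real.log (NormedSpace.exp b) := by
    rw [he.cfc_eq, matFun, dif_pos he]
    rfl
  rw [h1]
  exact @CFC.log_exp (Matrix m m ℂ) Matrix.linftyOpNormedRing _ Matrix.linftyOpNormedAlgebra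
    Matrix.IsHermitian.instContinuousFunctionalCalculus b hb

lemma D_of_curve {x h k : Matrix m m ℂ} {D : Matrix m m ℂ →L[ℂ] Matrix m m ℂ}
    (hD : IsFDerivMatFun Real.log x D) (γ l : ℝ → Matrix m m ℂ)
    (hl : ∀ τ, (l τ).IsHermitian) (hγ : ∀ τ, γ τ = NormedSpace.exp (l τ)) (h0 : γ 0 = x)
    (dγ : HasDerivAt γ h 0) (dl : HasDerivAt l k 0) : D h = k := by
  have h1 := hD.comp_hasDerivAt_of_eq (0 : ℝ) dγ
    (Filter.Eventually.of_forall fun τ => by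
      simp only [Set.mem_ofPred_eq]; rw [hγ]; exact (hl τ).exp) h0.symm
  have h2 : matFun Real.log ∘ γ = l := by
    funext τ
    simp only [Function.comp_apply, hγ, matFun_log_exp _ (hl τ)]
  rw [h2] at h1
  exact h1.unique dl

lemma D_comm_skew {x a c : Matrix m m ℂ} {D : Matrix m m ℂ →L[ℂ] Matrix m m ℂ}
    (hD : IsFDerivMatFun Real.log x D) (ha : a.IsHermitian) (hx : NormedSpace.exp a = x)
    (hc : cᴴ = -c) : D (c * x - x * c) = c * a - a * c := by
  have key : ∀ τ : ℝ, NormedSpace.exp (τ • (-c)) = (NormedSpace.exp (τ • c))⁻¹ := fun τ => by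
    rw [smul_neg, Matrix.exp_neg]
  refine D_of_curve hD _ _ (fun τ => ?_) (fun τ => ?_) ?_ (deriv_conj_exp c x)
    (deriv_conj_exp c a)
  · have h1 : NormedSpace.exp (τ • (-c)) = (NormedSpace.exp (τ • c))ᴴ := by
      rw [← Matrix.exp_conjTranspose, Matrix.conjTranspose_smul, hc]; simp
    simp only [h1]
    exact Matrix.isHermitian_mul_mul_conjTranspose _ ha
  · simp only [key]
    rw [Matrix.exp_conj _ _ (Matrix.isUnit_exp _), hx]
  · simp

lemma D_comm {x a : Matrix m m ℂ} {D : Matrix m m ℂ →L[ℂ] Matrix m m ℂ}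
    (hD : IsFDerivMatFun Real.log x D) (ha : a.IsHermitian) (hx : NormedSpace.exp a = x)
    (c : Matrix m m ℂ) : D (c * x - x * c) = c * a - a * c := by
  have h1 := D_comm_skew hD ha hx (c := c - cᴴ) (by simp)
  have h2 := D_comm_skew hD ha hx (c := Complex.I • (c + cᴴ)) (by
    simp [Matrix.conjTranspose_smul, add_comm])
  have e : ∀ z : Matrix m m ℂ, (2 : ℂ) • (c * z - z * c) =
      ((c - cᴴ) * z - z * (c - cᴴ)) -
        Complex.I • ((Complex.I • (c + cᴴ)) * z - z * (Complex.I • (c + cᴴ))) := by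
    intro z
    simp only [Matrix.smul_mul, Matrix.mul_smul, smul_sub, smul_smul, Complex.I_mul_I, neg_smul,
      one_smul, two_smul, sub_mul, mul_sub, add_mul, mul_add]
    abel
  have h3 : (2 : ℂ) • D (c * x - x * c) = (2 : ℂ) • (c * a - a * c) := by
    rw [← map_smul, e x, map_sub, map_smul, h1, h2, e a]
  exact smul_right_injective _ (two_ne_zero) h3

lemma D_block_herm {x a b : Matrix m m ℂ} {D : Matrix m m ℂ →L[ℂ] Matrix m m ℂ}
    (hD : IsFDerivMatFun Real.log x D) (ha : a.IsHermitian) (hx : NormedSpace.exp a = x)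
    (hb : bᴴ = b) (hab : a * b = b * a) : D (x * b) = b := by
  refine D_of_curve hD _ (fun τ : ℝ => a + τ • b) (fun τ => ?_) (fun τ => ?_) ?_
    (deriv_mul_exp x b) ?_
  · simp [Matrix.IsHermitian, Matrix.conjTranspose_smul, hb, ha.eq]
  · rw [Matrix.exp_add_of_commute, hx]
    exact Commute.smul_right hab τ
  · simp
  · have h1 := ((hasDerivAt_id (0 : ℝ)).smul_const b).const_add a
    rw [one_smul] at h1
    exact h1

lemma D_block {x a b : Matrix m m ℂ} {D : Matrix m m ℂ →L[ℂ] Matrix m m ℂ}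
    (hD : IsFDerivMatFun Real.log x D) (ha : a.IsHermitian) (hx : NormedSpace.exp a = x)
    (hab : a * b = b * a) : D (x * b) = b := by
  have hab' : a * bᴴ = bᴴ * a := by
    have := congrArg Matrix.conjTranspose hab
    simp only [Matrix.conjTranspose_mul, ha.eq] at this
    exact this.symm
  have h1 := D_block_herm hD ha hx (b := b + bᴴ) (by simp [add_comm])
    (by rw [mul_add, add_mul, hab, hab'])
  have h2 := D_block_herm hD ha hx (b := Complex.I • (b - bᴴ)) (by
    simp [Matrix.conjTranspose_smul, smul_sub, sub_eq_add_neg, add_comm])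
    (by simp only [Matrix.mul_smul, Matrix.smul_mul, mul_sub, sub_mul, hab, hab'])
  have e : (2 : ℂ) • b = (b + bᴴ) - Complex.I • (Complex.I • (b - bᴴ)) := by
    simp only [smul_smul, Complex.I_mul_I, neg_smul, one_smul, two_smul]
    abel
  have h3 : (2 : ℂ) • D (x * b) = (2 : ℂ) • b := by
    rw [← map_smul, ← Matrix.mul_smul, e, mul_sub, Matrix.mul_smul, map_sub, map_smul, h1, h2]
  exact smul_right_injective _ (two_ne_zero) h3

/-- The divided difference of the logarithm. -/
noncomputable def logDD (a b : ℝ) : ℝ :=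
  if a = b then a⁻¹ else (Real.log a - Real.log b) / (a - b)

lemma seg_pos {a b s : ℝ} (ha : 0 < a) (hb : 0 < b) (h0 : 0 ≤ s) (h1 : s ≤ 1) :
    0 < s * a + (1 - s) * b := by
  rcases h0.eq_or_lt with rfl | h
  · simpa using hb
  · have := mul_pos h ha
    have := mul_nonneg (sub_nonneg.2 h1) hb.le
    linarith

lemma seg_intervalIntegrable {a b : ℝ} (ha : 0 < a) (hb : 0 < b) :
    IntervalIntegrable (fun s : ℝ => (s * a + (1 - s) * b)⁻¹) MeasureTheory.volume 0 1 := by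
  apply ContinuousOn.intervalIntegrable
  apply ContinuousOn.inv₀ (by fun_prop)
  intro s hs
  rw [Set.uIcc_of_le zero_le_one] at hs
  exact (seg_pos ha hb hs.1 hs.2).ne'

lemma integral_seg {a b : ℝ} (ha : 0 < a) (hb : 0 < b) :
    ∫ s in (0 : ℝ)..1, (s * a + (1 - s) * b)⁻¹ = logDD a b := by
  unfold logDD
  split_ifs with h
  · subst h
    have : ∀ s : ℝ, s * a + (1 - s) * a = a := fun s => by ring
    simp [this]
  · have hab : a - b ≠ 0 := sub_ne_zero.2 h
    rw [intervalIntegral.integral_eq_sub_of_hasDerivAt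
      (f := fun s : ℝ => Real.log (s * a + (1 - s) * b) / (a - b)) _
      (seg_intervalIntegrable ha hb)]
    · simp [sub_div]
    · intro s hs
      rw [Set.uIcc_of_le zero_le_one] at hs
      have hp := seg_pos ha hb hs.1 hs.2
      have h1 : HasDerivAt (fun s : ℝ => s * a + (1 - s) * b) (a - b) s := by
        have := ((hasDerivAt_id s).mul_const a).add
          (((hasDerivAt_id s).const_sub 1).mul_const b)
        refine this.congr_deriv ?_
        ring
      refine ((h1.log hp.ne').div_const (a - b)).congr_deriv ?_
      field_simp

lemma exists_diag {x : Matrix m m ℂ} (hx : x.PosDef) :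
    ∃ (U : Matrix m m ℂ) (l : m → ℝ), Uᴴ * U = 1 ∧ U * Uᴴ = 1 ∧ (∀ i, 0 < l i) ∧
      x = U * Matrix.diagonal (fun i => (l i : ℂ)) * Uᴴ := by
  refine ⟨hx.1.eigenvectorUnitary, hx.1.eigenvalues, ?_, ?_, hx.eigenvalues_pos, ?_⟩
  · exact Unitary.coe_star_mul_self hx.1.eigenvectorUnitary
  · exact Unitary.coe_mul_star_self hx.1.eigenvectorUnitary
  · conv_lhs => rw [hx.1.spectral_theorem]
    rfl

lemma exp_log_diag {U : Matrix m m ℂ} {l : m → ℝ} (hU : Uᴴ * U = 1) (hU' : U * Uᴴ = 1)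
    (hl : ∀ i, 0 < l i) :
    NormedSpace.exp (U * Matrix.diagonal (fun i => (Real.log (l i) : ℂ)) * Uᴴ) =
      U * Matrix.diagonal (fun i => (l i : ℂ)) * Uᴴ := by
  have hinv : U⁻¹ = Uᴴ := Matrix.inv_eq_left_inv hU
  have hunit : IsUnit U := ⟨⟨U, Uᴴ, hU', hU⟩, rfl⟩
  rw [← hinv, Matrix.exp_conj _ _ hunit, Matrix.exp_diagonal]
  congr 3
  funext i
  rw [Pi.coe_exp, ← Complex.exp_eq_exp_ℂ, ← Complex.ofReal_exp, Real.exp_log (hl i)]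

lemma diag_mul_E {U : Matrix m m ℂ} (hU : Uᴴ * U = 1) (d : m → ℂ) (i j : m) :
    (U * Matrix.diagonal d * Uᴴ) * (U * Matrix.single i j 1 * Uᴴ) =
      d i • (U * Matrix.single i j 1 * Uᴴ) := by
  have : (U * Matrix.diagonal d * Uᴴ) * (U * Matrix.single i j 1 * Uᴴ) =
      U * (Matrix.diagonal d * (Uᴴ * U) * Matrix.single i j 1) * Uᴴ := by
    simp only [Matrix.mul_assoc]
  rw [this, hU, Matrix.mul_one]
  have h2 : Matrix.diagonal d * Matrix.single i j 1 = d i • Matrix.single i j (1 : ℂ) := by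
    ext k l
    by_cases h : i = k
    · subst h; simp [Matrix.diagonal_mul]
    · simp [Matrix.diagonal_mul, h]
  rw [h2, Matrix.mul_smul, Matrix.smul_mul]

lemma E_mul_diag {U : Matrix m m ℂ} (hU : Uᴴ * U = 1) (d : m → ℂ) (i j : m) :
    (U * Matrix.single i j 1 * Uᴴ) * (U * Matrix.diagonal d * Uᴴ) =
      d j • (U * Matrix.single i j 1 * Uᴴ) := by
  have : (U * Matrix.single i j 1 * Uᴴ) * (U * Matrix.diagonal d * Uᴴ) =
      U * (Matrix.single i j 1 * (Uᴴ * U) * Matrix.diagonal d) * Uᴴ := by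
    simp only [Matrix.mul_assoc]
  rw [this, hU, Matrix.mul_one]
  have h2 : Matrix.single i j 1 * Matrix.diagonal d = d j • Matrix.single i j (1 : ℂ) := by
    ext k l
    by_cases h : j = l
    · subst h; simp [Matrix.mul_diagonal, mul_comm]
    · simp [Matrix.mul_diagonal, h]
  rw [h2, Matrix.mul_smul, Matrix.smul_mul]

lemma D_single {U : Matrix m m ℂ} {l : m → ℝ} (hU : Uᴴ * U = 1) (hU' : U * Uᴴ = 1)
    (hl : ∀ i, 0 < l i) {D : Matrix m m ℂ →L[ℂ] Matrix m m ℂ}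
    (hD : IsFDerivMatFun Real.log (U * Matrix.diagonal (fun i => (l i : ℂ)) * Uᴴ) D) (i j : m) :
    D (U * Matrix.single i j 1 * Uᴴ) =
      (logDD (l i) (l j) : ℂ) • (U * Matrix.single i j 1 * Uᴴ) := by
  have ha : (U * Matrix.diagonal (fun i => (Real.log (l i) : ℂ)) * Uᴴ).IsHermitian := by
    apply Matrix.isHermitian_mul_mul_conjTranspose
    rw [Matrix.isHermitian_diagonal_iff]
    intro i
    simp [IsSelfAdjoint]
  have hx := exp_log_diag hU hU' hl
  unfold logDD
  split_ifs with h
  · have h1 := D_block hD ha hx (b := U * Matrix.single i j 1 * Uᴴ)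
      (by rw [diag_mul_E hU, E_mul_diag hU, h])
    rw [diag_mul_E hU, map_smul] at h1
    have hne : (l i : ℂ) ≠ 0 := by exact_mod_cast (hl i).ne'
    rw [Complex.ofReal_inv, eq_inv_smul_iff₀ hne, h1]
  · have h1 := D_comm hD ha hx (U * Matrix.single i j 1 * Uᴴ)
    simp only [diag_mul_E hU, E_mul_diag hU, ← sub_smul, map_smul] at h1
    have hne : ((l j : ℂ) - l i) ≠ 0 := by
      rw [sub_ne_zero]; exact_mod_cast Ne.symm h
    rw [← eq_inv_smul_iff₀ hne] at h1
    rw [h1, smul_smul]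
    congr 1
    have hne' : ((l i : ℂ) - l j) ≠ 0 := by
      rw [sub_ne_zero]; exact_mod_cast h
    push_cast
    field_simp
    ring

lemma D_formula {U : Matrix m m ℂ} {l : m → ℝ} (hU : Uᴴ * U = 1) (hU' : U * Uᴴ = 1)
    (hl : ∀ i, 0 < l i) {D : Matrix m m ℂ →L[ℂ] Matrix m m ℂ}
    (hD : IsFDerivMatFun Real.log (U * Matrix.diagonal (fun i => (l i : ℂ)) * Uᴴ) D)
    (g : Matrix m m ℂ) :
    D (U * g * Uᴴ) = U * Matrix.of (fun i j => (logDD (l i) (l j) : ℂ) * g i j) * Uᴴ := by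
  have key : ∀ g : Matrix m m ℂ, U * g * Uᴴ = ∑ i, ∑ j, g i j • (U * Matrix.single i j 1 * Uᴴ) := by
    intro g
    conv_lhs => rw [Matrix.matrix_eq_sum_single g]
    simp only [Matrix.mul_sum, Matrix.sum_mul]
    refine Finset.sum_congr rfl fun i _ => Finset.sum_congr rfl fun j _ => ?_
    rw [← Matrix.smul_mul, ← Matrix.mul_smul, Matrix.smul_single, smul_eq_mul, mul_one]
  rw [key g, key]
  simp only [map_sum, map_smul, D_single hU hU' hl hD, smul_smul, Matrix.of_apply, mul_comm]

lemma trace_conj_mul (A B : Matrix m m ℂ) :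
    (Aᴴ * B).trace = ∑ i, ∑ j, star (A i j) * B i j := by
  simp only [Matrix.trace, Matrix.diag, Matrix.mul_apply, Matrix.conjTranspose_apply]
  exact Finset.sum_comm

/-- the variational functional -/
noncomputable def Gfun (s : ℝ) (k x h : Matrix m m ℂ) : ℝ :=
  2 * (kᴴ * h).trace.re - s * (kᴴ * (x * k)).trace.re - (1 - s) * (kᴴ * (k * x)).trace.re

lemma trace_U {U : Matrix m m ℂ} (hU : Uᴴ * U = 1) (A B : Matrix m m ℂ) :
    ((U * A * Uᴴ)ᴴ * (U * B * Uᴴ)).trace = (Aᴴ * B).trace := by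
  have : (U * A * Uᴴ)ᴴ * (U * B * Uᴴ) = U * (Aᴴ * (Uᴴ * U) * B) * Uᴴ := by
    simp only [Matrix.conjTranspose_mul, Matrix.conjTranspose_conjTranspose, Matrix.mul_assoc]
  rw [this, hU, Matrix.trace_mul_comm, ← Matrix.mul_assoc, hU, Matrix.mul_one, Matrix.one_mul]

lemma Gfun_diag {U : Matrix m m ℂ} {l : m → ℝ} (hU : Uᴴ * U = 1) (s : ℝ) (k h : Matrix m m ℂ) :
    Gfun s (U * k * Uᴴ) (U * Matrix.diagonal (fun i => (l i : ℂ)) * Uᴴ) (U * h * Uᴴ) =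
      ∑ i, ∑ j, (2 * (star (k i j) * h i j).re -
        (s * l i + (1 - s) * l j) * Complex.normSq (k i j)) := by
  have e : ∀ A B : Matrix m m ℂ, (U * A * Uᴴ) * (U * B * Uᴴ) = U * (A * B) * Uᴴ := by
    intro A B
    have : (U * A * Uᴴ) * (U * B * Uᴴ) = U * (A * (Uᴴ * U) * B) * Uᴴ := by
      simp only [Matrix.mul_assoc]
    rw [this, hU, Matrix.mul_one]
  unfold Gfun
  rw [e, e, trace_U hU, trace_U hU, trace_U hU, trace_conj_mul, trace_conj_mul, trace_conj_mul]
  simp only [Complex.re_sum, Finset.mul_sum, ← Finset.sum_sub_distrib]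
  refine Finset.sum_congr rfl fun i _ => Finset.sum_congr rfl fun j _ => ?_
  rw [Matrix.diagonal_mul, Matrix.mul_diagonal]
  simp [Complex.normSq_apply]
  ring

lemma scalar_le (k h : ℂ) {c : ℝ} (hc : 0 < c) :
    2 * (star k * h).re - c * Complex.normSq k ≤ Complex.normSq h * c⁻¹ := by
  have h1 : Complex.normSq h * c⁻¹ - (2 * (star k * h).re - c * Complex.normSq k) =
      ((h.re - c * k.re) ^ 2 + (h.im - c * k.im) ^ 2) * c⁻¹ := by
    simp [Complex.normSq_apply]
    field_simp
    ring
  have h2 : 0 ≤ ((h.re - c * k.re) ^ 2 + (h.im - c * k.im) ^ 2) * c⁻¹ := by positivity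
  linarith

lemma scalar_eq (h : ℂ) {c : ℝ} (hc : 0 < c) :
    2 * (star ((c⁻¹ : ℝ) * h) * h).re - c * Complex.normSq ((c⁻¹ : ℝ) * h) =
      Complex.normSq h * c⁻¹ := by
  simp [Complex.normSq_apply]
  field_simp
  ring

lemma exists_phi {x : Matrix m m ℂ} (hx : x.PosDef) {D : Matrix m m ℂ →L[ℂ] Matrix m m ℂ}
    (hD : IsFDerivMatFun Real.log x D) (h : Matrix m m ℂ) :
    ∃ φ : ℝ → ℝ, IntervalIntegrable φ MeasureTheory.volume 0 1 ∧
      ∫ s in (0 : ℝ)..1, φ s = (Matrix.trace (hᴴ * D h)).re ∧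
      ∀ s ∈ Set.Icc (0 : ℝ) 1, (∀ k, Gfun s k x h ≤ φ s) ∧ ∃ k, Gfun s k x h = φ s := by
  obtain ⟨U, l, hU, hU', hl, rfl⟩ := exists_diag hx
  have conj : ∀ A : Matrix m m ℂ, A = U * (Uᴴ * A * U) * Uᴴ := by
    intro A
    have : U * (Uᴴ * A * U) * Uᴴ = (U * Uᴴ) * A * (U * Uᴴ) := by simp only [Matrix.mul_assoc]
    rw [this, hU', Matrix.mul_one, Matrix.one_mul]
  obtain ⟨g, rfl⟩ : ∃ g, h = U * g * Uᴴ := ⟨_, conj h⟩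
  have hint : ∀ i j, IntervalIntegrable
      (fun s : ℝ => Complex.normSq (g i j) * (s * l i + (1 - s) * l j)⁻¹)
      MeasureTheory.volume 0 1 := fun i j =>
    (seg_intervalIntegrable (hl i) (hl j)).const_mul _
  have hint2 : ∀ i, IntervalIntegrable
      (fun s : ℝ => ∑ j, Complex.normSq (g i j) * (s * l i + (1 - s) * l j)⁻¹)
      MeasureTheory.volume 0 1 := fun i => by
    have := IntervalIntegrable.sum Finset.univ (fun j _ => hint i j)
    exact this.congr (fun s _ => by simp)
  refine ⟨fun s => ∑ i, ∑ j, Complex.normSq (g i j) * (s * l i + (1 - s) * l j)⁻¹, ?_, ?_, ?_⟩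
  · have := IntervalIntegrable.sum Finset.univ (fun i _ => hint2 i)
    exact this.congr (fun s _ => by simp)
  · rw [intervalIntegral.integral_finsetSum (fun i _ => hint2 i), D_formula hU hU' hl hD,
      trace_U hU, trace_conj_mul, Complex.re_sum]
    refine Finset.sum_congr rfl fun i _ => ?_
    rw [intervalIntegral.integral_finsetSum (fun j _ => hint i j), Complex.re_sum]
    refine Finset.sum_congr rfl fun j _ => ?_
    rw [intervalIntegral.integral_const_mul, integral_seg (hl i) (hl j)]
    simp [Complex.normSq_apply]
    ring
  · intro s hs
    refine ⟨fun k => ?_, U * Matrix.of (fun i j =>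
      (((s * l i + (1 - s) * l j)⁻¹ : ℝ) : ℂ) * g i j) * Uᴴ, ?_⟩
    · rw [conj k, Gfun_diag hU]
      exact Finset.sum_le_sum fun i _ => Finset.sum_le_sum fun j _ =>
        scalar_le _ _ (seg_pos (hl i) (hl j) hs.1 hs.2)
    · rw [Gfun_diag hU]
      refine Finset.sum_congr rfl fun i _ => Finset.sum_congr rfl fun j _ => ?_
      exact scalar_eq _ (seg_pos (hl i) (hl j) hs.1 hs.2)

lemma Gfun_affine (s t u : ℝ) (k x y h h' : Matrix m m ℂ) :
    Gfun s k (t • x + u • y) (t • h + u • h') = t * Gfun s k x h + u * Gfun s k y h' := by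
  simp only [Gfun, mul_add, add_mul, Matrix.smul_mul, Matrix.mul_smul, Matrix.trace_add,
    Matrix.trace_smul, Complex.add_re, Complex.smul_re, smul_eq_mul]
  ring

end helpers

/-- **Lieb.** For every `n`, the map `(x, h) ↦ Tr (h* ⬝ D log(x) h)` is jointly
convex in pairs `(x, h)` of an `n × n` positive definite matrix `x` and an arbitrary matrix `h`,
where `D log(x)` is the Fréchet differential of the matrix logarithm at `x`. -/
theorem trace_fderiv_log_jointly_convex (n : ℕ)
    (Dlog : Matrix (Fin n) (Fin n) ℂ → (Matrix (Fin n) (Fin n) ℂ →L[ℂ] Matrix (Fin n) (Fin n) ℂ))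
    (hD : ∀ x : Matrix (Fin n) (Fin n) ℂ, x.PosDef → IsFDerivMatFun Real.log x (Dlog x)) :
    ConvexOn ℝ {q : Matrix (Fin n) (Fin n) ℂ × Matrix (Fin n) (Fin n) ℂ | q.1.PosDef}
      (fun q => (Matrix.trace (q.2ᴴ * (Dlog q.1) q.2)).re) := by
  have hconv : Convex ℝ {q : Matrix (Fin n) (Fin n) ℂ × Matrix (Fin n) (Fin n) ℂ | q.1.PosDef} := by
    rintro ⟨x, h⟩ hx ⟨y, k⟩ hy t u ht hu htu
    simp only [Set.mem_ofPred_eq, Prod.smul_mk, Prod.mk_add_mk] at hx hy ⊢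
    rcases ht.eq_or_lt with rfl | ht
    · obtain rfl : u = 1 := by linarith
      simpa using hy
    · exact (hx.smul ht).add_posSemidef (hy.posSemidef.smul hu)
  refine ⟨hconv, ?_⟩
  rintro ⟨x, h⟩ hx ⟨y, k⟩ hy t u ht hu htu
  have hz := hconv hx hy ht hu htu
  simp only [Set.mem_ofPred_eq, Prod.smul_mk, Prod.mk_add_mk, smul_eq_mul] at hx hy hz ⊢
  obtain ⟨φx, ix, ex, px⟩ := exists_phi hx (hD x hx) h
  obtain ⟨φy, iy, ey, py⟩ := exists_phi hy (hD y hy) k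
  obtain ⟨φz, iz, ez, pz⟩ := exists_phi hz (hD _ hz) (t • h + u • k)
  rw [← ex, ← ey, ← ez, ← intervalIntegral.integral_const_mul,
    ← intervalIntegral.integral_const_mul,
    ← intervalIntegral.integral_add (ix.const_mul t) (iy.const_mul u)]
  refine intervalIntegral.integral_mono_on zero_le_one iz
    ((ix.const_mul t).add (iy.const_mul u)) fun s hs => ?_
  obtain ⟨w, hw⟩ := (pz s hs).2
  rw [← hw, Gfun_affine]
  exact add_le_add (mul_le_mul_of_nonneg_left ((px s hs).1 w) ht)
    (mul_le_mul_of_nonneg_left ((py s hs).1 w) hu)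
end
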